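/- arXiv:math-ph/0305009 — 3 statements merged into one kernel-verified Lean document; each statement's English description precedes it below -/
import Mathlib

section
/- Let Ω ⊆ ℝ × ℝ³ be open, let φ : Ω → ℝ be twice continuously differentiable, let a : Ω → ℝ³ and V : Ω → ℝ be real-valued, and define ω±(ξ) = ±ξ/√(1+|ξ|²) and Γ±(t,x) = i a(t,x)·ω±(∇φ(t,x)) − i V(t,x) − ½ div_x(ω±(∇φ(t,x))). If u₊, u₋ : Ω → ℂ⁴ are differentiable and solve the transport equations ∂ₜ u± + (ω±(∇φ)·∇) u± = Γ± u± on Ω, then the continuity equation ∂ₜ(|u₊|² + |u₋|²) + div_x(ω₊(∇φ)|u₊|² + ω₋(∇φ)|u₋|²) = 0 holds pointwise on Ω; in particular, for solutions compactly supported in x, the total charge ∫_{ℝ³}(|u₊(t,x)|² + |u₋(t,x)|²) dx is conserved. -/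
noncomputable section

/-- The electronic group velocity ω₊(ξ) = ξ/√(1+|ξ|²). -/
def omegaP (g : Fin 3 → ℝ) : Fin 3 → ℝ := fun k => g k / Real.sqrt (1 + ∑ j, g j ^ 2)

/-- The positronic group velocity ω₋(ξ) = −ξ/√(1+|ξ|²). -/
def omegaM (g : Fin 3 → ℝ) : Fin 3 → ℝ := fun k => -(g k / Real.sqrt (1 + ∑ j, g j ^ 2))

/-!
The real part of `Γ±` is `-½ div_x ω±(∇φ)`, the terms in `a` and `V` being purely imaginary. Hence
the derivative of `|u|²` along the space-time vector `(1, ω(∇φ))`, namely `2 Re ⟨u, Γ u⟩`, equals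
`-(div_x ω(∇φ)) |u|²`, which is the continuity equation for the density `|u|²` carried by `ω(∇φ)`.
Conservation follows from the divergence theorem on a box `[s, t] × [-R, R]ⁿ`, the flux vanishing on
the lateral faces. Differentiating the charge under the integral sign would need a domination of
`∂ₜ |u|²`, which mere differentiability of `u` does not give.
-/

section ContinuityEquation

variable {n : ℕ} {E : Type*} [NormedAddCommGroup E] [NormedSpace ℝ E]

/-- The divergence `div_x J` in the space variables of a flux on space-time `ℝ × ℝⁿ`. The `k`-th
component `J · k` takes values in `E`, so that vector-valued densities are allowed. -/
def spatialDiv (J : ℝ × (Fin n → ℝ) → Fin n → E) (p : ℝ × (Fin n → ℝ)) : E :=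
  ∑ k, fderiv ℝ (fun q => J q k) p (0, Pi.single k 1)

/-- The continuity equation `∂ₜ ρ + div_x J = 0` at a space-time point, for the density `ρ` and the
flux `J`. Differentiability is part of the notion, as `fderiv` is zero where it fails. -/
structure ContinuityEquationAt (ρ : ℝ × (Fin n → ℝ) → E) (J : ℝ × (Fin n → ℝ) → Fin n → E)
    (p : ℝ × (Fin n → ℝ)) : Prop where
  density_differentiableAt : DifferentiableAt ℝ ρ p
  flux_differentiableAt : DifferentiableAt ℝ J p
  fderiv_add_spatialDiv : fderiv ℝ ρ p (1, 0) + spatialDiv J p = 0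

lemma spatialDiv_add {J K : ℝ × (Fin n → ℝ) → Fin n → E} {p : ℝ × (Fin n → ℝ)}
    (hJ : DifferentiableAt ℝ J p) (hK : DifferentiableAt ℝ K p) :
    spatialDiv (fun q k => J q k + K q k) p = spatialDiv J p + spatialDiv K p := by
  rw [differentiableAt_pi] at hJ hK
  simp only [spatialDiv, fderiv_fun_add (hJ _) (hK _), add_apply, Finset.sum_add_distrib]

lemma ContinuityEquationAt.add {ρ σ : ℝ × (Fin n → ℝ) → E} {J K : ℝ × (Fin n → ℝ) → Fin n → E}
    {p : ℝ × (Fin n → ℝ)} (hρ : ContinuityEquationAt ρ J p) (hσ : ContinuityEquationAt σ K p) :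
    ContinuityEquationAt (fun q => ρ q + σ q) (fun q k => J q k + K q k) p where
  density_differentiableAt := hρ.density_differentiableAt.add hσ.density_differentiableAt
  flux_differentiableAt := hρ.flux_differentiableAt.add hσ.flux_differentiableAt
  fderiv_add_spatialDiv := by
    rw [fderiv_fun_add hρ.density_differentiableAt hσ.density_differentiableAt, add_apply,
      spatialDiv_add hρ.flux_differentiableAt hσ.flux_differentiableAt, add_add_add_comm,
      hρ.fderiv_add_spatialDiv, hσ.fderiv_add_spatialDiv, add_zero]

lemma map_prodMk_eq_add_sum (L : ℝ × (Fin n → ℝ) →L[ℝ] E) (c : ℝ) (v : Fin n → ℝ) :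
    L (c, v) = L (c, 0) + ∑ k, v k • L (0, Pi.single k 1) := by
  have hv : ((0 : ℝ), v) = ∑ k, v k • ((0 : ℝ), (Pi.single k 1 : Fin n → ℝ)) := by
    ext <;> simp [Prod.fst_sum, Prod.snd_sum, Pi.single_apply]
  simp only [← map_smul, ← map_sum, ← hv, ← map_add, Prod.mk_add_mk, add_zero, zero_add]

lemma spatialDiv_smul {v : ℝ × (Fin n → ℝ) → Fin n → ℝ} {ρ : ℝ × (Fin n → ℝ) → E}
    {p : ℝ × (Fin n → ℝ)} (hv : DifferentiableAt ℝ v p) (hρ : DifferentiableAt ℝ ρ p) :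
    spatialDiv (fun q k => v q k • ρ q) p = fderiv ℝ ρ p (0, v p) + spatialDiv v p • ρ p := by
  rw [differentiableAt_pi] at hv
  rw [map_prodMk_eq_add_sum, Prod.mk_zero_zero, map_zero, zero_add]
  simp only [spatialDiv, fderiv_fun_smul (hv _) hρ, add_apply, smul_apply,
    ContinuousLinearMap.smulRight_apply, Finset.sum_add_distrib, Finset.sum_smul]

end ContinuityEquation

section Transport

variable {n : ℕ} {v : ℝ × (Fin n → ℝ) → Fin n → ℝ} {p : ℝ × (Fin n → ℝ)}

lemma continuityEquationAt_norm_sq {F : Type*} [NormedAddCommGroup F] [InnerProductSpace ℝ F]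
    {u : ℝ × (Fin n → ℝ) → F} (hu : DifferentiableAt ℝ u p) (hv : DifferentiableAt ℝ v p)
    (htransport : inner ℝ (u p) (fderiv ℝ u p (1, v p)) = -(1 / 2) * spatialDiv v p * ‖u p‖ ^ 2) :
    ContinuityEquationAt (fun q => ‖u q‖ ^ 2) (fun q k => v q k * ‖u q‖ ^ 2) p where
  density_differentiableAt := hu.norm_sq ℝ
  flux_differentiableAt :=
    differentiableAt_pi.2 fun k => (differentiableAt_pi.1 hv k).mul (hu.norm_sq ℝ)
  fderiv_add_spatialDiv := by
    have hderiv (w : ℝ × (Fin n → ℝ)) :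
        fderiv ℝ (fun q => ‖u q‖ ^ 2) p w = 2 * inner ℝ (u p) (fderiv ℝ u p w) := by
      simp [hu.hasFDerivAt.norm_sq.fderiv]
    have hsplit : ((1 : ℝ), v p) = (1, 0) + (0, v p) := by simp
    have hdiv := spatialDiv_smul hv (hu.norm_sq ℝ)
    simp only [smul_eq_mul] at hdiv
    rw [hsplit, map_add, inner_add_right] at htransport
    rw [hdiv, hderiv, hderiv]
    linear_combination 2 * htransport

/-- The charge density `|u|² = ∑ i, |u i|²` of a field `u` with complex components. The function
type `ι → ℂ` carries the supremum norm, so this is not `‖u q‖ ^ 2`. -/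
def chargeDensity {X ι : Type*} [Fintype ι] (u : X → ι → ℂ) (q : X) : ℝ :=
  ∑ i, Complex.normSq (u q i)

lemma chargeDensity_eq_norm_sq_toLp {X ι : Type*} [Fintype ι] (u : X → ι → ℂ) (q : X) :
    chargeDensity u q = ‖WithLp.toLp 2 (u q)‖ ^ 2 := by
  simp [chargeDensity, PiLp.norm_sq_eq_of_L2, Complex.normSq_eq_norm_sq]

lemma real_inner_toLp_smul_self {ι : Type*} [Fintype ι] (z : ℂ) (x : ι → ℂ) :
    inner ℝ (WithLp.toLp 2 x) (WithLp.toLp 2 (z • x)) = z.re * ‖WithLp.toLp 2 x‖ ^ 2 := by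
  simp only [PiLp.inner_apply, PiLp.norm_sq_eq_of_L2, Finset.mul_sum]
  refine Finset.sum_congr rfl fun i _ => ?_
  rw [Pi.smul_apply, smul_eq_mul, Complex.inner, mul_assoc, Complex.mul_conj',
    ← Complex.ofReal_pow, Complex.re_mul_ofReal]

lemma continuityEquationAt_chargeDensity {ι : Type*} [Fintype ι]
    {u : ℝ × (Fin n → ℝ) → ι → ℂ} {Γ : ℂ}
    (hu : DifferentiableAt ℝ u p) (hv : DifferentiableAt ℝ v p)
    (hΓ : Γ.re = -(1 / 2) * spatialDiv v p)
    (htransport :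
      fderiv ℝ u p (1, 0) + ∑ k, v p k • fderiv ℝ u p (0, Pi.single k 1) = Γ • u p) :
    ContinuityEquationAt (chargeDensity u) (fun q k => v q k * chargeDensity u q) p := by
  let toL2 : (ι → ℂ) ≃L[ℝ] PiLp 2 fun _ : ι => ℂ := (PiLp.continuousLinearEquiv 2 ℝ _).symm
  have hderiv : fderiv ℝ (toL2 ∘ u) p (1, v p) = toL2 (Γ • u p) := by
    rw [toL2.comp_fderiv, ← htransport, ← map_prodMk_eq_add_sum]
    rfl
  have hcharge : chargeDensity u = fun q => ‖(toL2 ∘ u) q‖ ^ 2 :=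
    funext (chargeDensity_eq_norm_sq_toLp u)
  rw [hcharge]
  refine continuityEquationAt_norm_sq (toL2.differentiableAt.comp p hu) hv ?_
  rw [hderiv, ← hΓ]
  exact real_inner_toLp_smul_self Γ (u p)

end Transport

section Conservation

open MeasureTheory Set

variable {n : ℕ} {E : Type*} [NormedAddCommGroup E] [NormedSpace ℝ E]
  {ρ : ℝ × (Fin n → ℝ) → E} {J : ℝ × (Fin n → ℝ) → Fin n → E}

lemma measurePreserving_consEquivL :
    MeasurePreserving (Fin.consEquivL ℝ fun _ : Fin (n + 1) => ℝ) := by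
  convert (volume_preserving_piFinSuccAbove (fun _ => ℝ) (0 : Fin (n + 1))).symm using 1
  exact funext fun p => (Fin.insertNth_zero' p.1 p.2).symm

lemma sum_fderiv_consEquivL_symm_single (p : ℝ × (Fin n → ℝ)) :
    ∑ i : Fin (n + 1), fderiv ℝ (fun q => (Fin.cons (ρ q) (J q) : Fin (n + 1) → E) i) p
        ((Fin.consEquivL ℝ fun _ => ℝ).symm (Pi.single i 1))
      = fderiv ℝ ρ p (1, 0) + spatialDiv J p := by
  have hsingle_zero : (Fin.consEquivL ℝ fun _ : Fin (n + 1) => ℝ).symm (Pi.single 0 1) = (1, 0) :=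
    Prod.ext rfl (funext fun j => by simp [Fin.tail])
  have hsingle_succ (k : Fin n) :
      (Fin.consEquivL ℝ fun _ : Fin (n + 1) => ℝ).symm (Pi.single k.succ 1)
        = (0, Pi.single k 1) :=
    Prod.ext rfl (funext fun j => by simp [Fin.tail, Pi.single_apply])
  simp only [Fin.sum_univ_succ, hsingle_zero, hsingle_succ, Fin.cons_zero, Fin.cons_succ]
  rfl

lemma setIntegral_lateral_face_eq_zero {s t : ℝ} {a b : Fin n → ℝ} {k : Fin n}
    {g : ℝ × (Fin n → ℝ) → E} {c : ℝ} (hc : c ∈ Icc (a k) (b k))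
    (hg : ∀ p ∈ Icc (s, a) (t, b), p.2 k = c → g p = 0) :
    ∫ x in Icc (Fin.consEquivL ℝ (fun _ => ℝ) (s, a) ∘ k.succ.succAbove)
        (Fin.consEquivL ℝ (fun _ => ℝ) (t, b) ∘ k.succ.succAbove),
      g ((Fin.consEquivL ℝ fun _ => ℝ).symm (k.succ.insertNth c x)) = 0 := by
  set e : (ℝ × (Fin n → ℝ)) ≃L[ℝ] (Fin (n + 1) → ℝ) := Fin.consEquivL ℝ fun _ => ℝ
  refine setIntegral_eq_zero_of_forall_eq_zero fun x hx => ?_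
  have hmem : k.succ.insertNth c x ∈ Icc (e (s, a)) (e (t, b)) :=
    Fin.insertNth_mem_Icc.2 ⟨hc, hx⟩
  have hcoord : (e.symm (k.succ.insertNth c x)).2 k = c :=
    Fin.insertNth_apply_same (α := fun _ => ℝ) k.succ c x
  exact hg _ ⟨(Fin.consOrderIso fun _ => ℝ).le_symm_apply.2 hmem.1,
    (Fin.consOrderIso fun _ => ℝ).symm_apply_le.2 hmem.2⟩ hcoord

lemma setIntegral_eq_of_continuityEquationAt {s t : ℝ} (hst : s ≤ t) {a b : Fin n → ℝ} (hab : a ≤ b)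
    (hcont : ∀ p ∈ Icc (s, a) (t, b), ContinuityEquationAt ρ J p)
    (hflux : ∀ k, ∀ p ∈ Icc (s, a) (t, b), p.2 k = a k ∨ p.2 k = b k → J p k = 0) :
    ∫ x in Icc a b, ρ (s, x) = ∫ x in Icc a b, ρ (t, x) := by
  let f (i : Fin (n + 1)) (p : ℝ × (Fin n → ℝ)) : E := Fin.cons (α := fun _ => E) (ρ p) (J p) i
  have hf (p) (hp : p ∈ Icc (s, a) (t, b)) : ∀ i, DifferentiableAt ℝ (f i) p :=
    Fin.cases (hcont p hp).density_differentiableAt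
      (differentiableAt_pi.1 (hcont p hp).flux_differentiableAt)
  have hdiv : EqOn (fun p => fderiv ℝ ρ p (1, 0) + spatialDiv J p) 0 (Icc (s, a) (t, b)) :=
    fun p hp => (hcont p hp).fderiv_add_spatialDiv
  have hgauss := integral_divergence_of_hasFDerivAt_off_countable_of_equiv
    (Fin.consEquivL ℝ fun _ => ℝ) (fun _ _ => (Fin.consOrderIso fun _ => ℝ).le_iff_le)
    measurePreserving_consEquivL f (fun i => fderiv ℝ (f i)) ∅ countable_empty (s, a) (t, b)
    ⟨hst, hab⟩ (fun i p hp => (hf p hp i).continuousAt.continuousWithinAt)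
    (fun p hp i => (hf p (interior_subset hp.1) i).hasFDerivAt) _
    (fun p => (sum_fderiv_consEquivL_symm_single p).symm)
    (integrableOn_zero.congr_fun hdiv.symm measurableSet_Icc)
  have hupper (k : Fin n) := setIntegral_lateral_face_eq_zero (right_mem_Icc.2 (hab k))
    fun p hp hpk => hflux k p hp (.inr hpk)
  have hlower (k : Fin n) := setIntegral_lateral_face_eq_zero (left_mem_Icc.2 (hab k))
    fun p hp hpk => hflux k p hp (.inl hpk)
  rw [setIntegral_eq_zero_of_forall_eq_zero hdiv, Fin.sum_univ_succ,
    Finset.sum_eq_zero fun k _ => ?_, add_zero, eq_comm, sub_eq_zero] at hgauss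
  · exact hgauss.symm
  · exact (congrArg₂ _ (hupper k) (hlower k)).trans (sub_zero 0)

lemma integral_eq_of_continuityEquationAt {t₁ t₂ R : ℝ}
    (hcont : ∀ p ∈ uIcc t₁ t₂ ×ˢ univ, ContinuityEquationAt ρ J p)
    (hsupp : ∀ τ ∈ uIcc t₁ t₂, ∀ x, R ≤ ‖x‖ → ρ (τ, x) = 0 ∧ J (τ, x) = 0) :
    ∫ x, ρ (t₁, x) = ∫ x, ρ (t₂, x) := by
  wlog hle : t₁ ≤ t₂ generalizing t₁ t₂
  · rw [uIcc_comm] at hcont hsupp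
    exact (this hcont hsupp (le_of_not_ge hle)).symm
  rw [uIcc_of_le hle] at hcont hsupp
  have hbox (τ) (hτ : τ ∈ Icc t₁ t₂) :
      ∫ x in Icc (fun _ => -|R|) (fun _ => |R|), ρ (τ, x) = ∫ x, ρ (τ, x) := by
    refine setIntegral_eq_integral_of_forall_compl_eq_zero fun x hx => (hsupp τ hτ x ?_).1
    contrapose! hx
    have hnorm : ‖x‖ ≤ |R| := hx.le.trans (le_abs_self R)
    have hcoord (k) : |x k| ≤ |R| := (norm_le_pi_norm x k).trans hnorm
    exact ⟨fun k => (abs_le.1 (hcoord k)).1, fun k => (abs_le.1 (hcoord k)).2⟩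
  rw [← hbox t₁ (left_mem_Icc.2 hle), ← hbox t₂ (right_mem_Icc.2 hle)]
  refine setIntegral_eq_of_continuityEquationAt hle (fun _ => neg_le_self (abs_nonneg R))
    (fun p hp => hcont p ⟨⟨hp.1.1, hp.2.1⟩, mem_univ _⟩) fun k p hp hpk => ?_
  have habs : |p.2 k| = |R| := by rcases hpk with h | h <;> simp [h]
  have hnorm : R ≤ ‖p.2‖ := (le_abs_self R).trans (habs ▸ norm_le_pi_norm p.2 k)
  exact congrFun (hsupp p.1 ⟨hp.1.1, hp.2.1⟩ p.2 hnorm).2 k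

theorem transport_continuity_and_charge_conservation_general {ιP ιM : Type*} [Fintype ιP]
    [Fintype ιM] {Ω : Set (ℝ × (Fin n → ℝ))} (hΩ : IsOpen Ω)
    {vP vM : ℝ × (Fin n → ℝ) → Fin n → ℝ}
    (hvP : DifferentiableOn ℝ vP Ω) (hvM : DifferentiableOn ℝ vM Ω)
    {uP : ℝ × (Fin n → ℝ) → ιP → ℂ} {uM : ℝ × (Fin n → ℝ) → ιM → ℂ}
    (huP : DifferentiableOn ℝ uP Ω) (huM : DifferentiableOn ℝ uM Ω)
    {ΓP ΓM : ℝ × (Fin n → ℝ) → ℂ}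
    (hΓP : ∀ p ∈ Ω, (ΓP p).re = -(1 / 2) * spatialDiv vP p)
    (hΓM : ∀ p ∈ Ω, (ΓM p).re = -(1 / 2) * spatialDiv vM p)
    (htp : ∀ p ∈ Ω, fderiv ℝ uP p (1, 0)
      + ∑ k, vP p k • fderiv ℝ uP p (0, Pi.single k 1) = ΓP p • uP p)
    (htm : ∀ p ∈ Ω, fderiv ℝ uM p (1, 0)
      + ∑ k, vM p k • fderiv ℝ uM p (0, Pi.single k 1) = ΓM p • uM p) :
    (∀ p ∈ Ω, ContinuityEquationAt (fun q => chargeDensity uP q + chargeDensity uM q)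
      (fun q k => vP q k * chargeDensity uP q + vM q k * chargeDensity uM q) p) ∧
    ∀ t₁ t₂ R : ℝ, uIcc t₁ t₂ ×ˢ univ ⊆ Ω →
      (∀ τ ∈ uIcc t₁ t₂, ∀ x, R ≤ ‖x‖ → uP (τ, x) = 0 ∧ uM (τ, x) = 0) →
      ∫ x, (chargeDensity uP (t₁, x) + chargeDensity uM (t₁, x))
        = ∫ x, (chargeDensity uP (t₂, x) + chargeDensity uM (t₂, x)) := by
  have hcont (p) (hp : p ∈ Ω) :=
    have hnhds := hΩ.mem_nhds hp
    (continuityEquationAt_chargeDensity (huP.differentiableAt hnhds) (hvP.differentiableAt hnhds)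
      (hΓP p hp) (htp p hp)).add
    (continuityEquationAt_chargeDensity (huM.differentiableAt hnhds) (hvM.differentiableAt hnhds)
      (hΓM p hp) (htm p hp))
  refine ⟨hcont, fun t₁ t₂ R hslab hsupp => ?_⟩
  refine integral_eq_of_continuityEquationAt (R := R) (fun p hp => hcont p (hslab hp))
    fun τ hτ x hx => ?_
  obtain ⟨huP_zero, huM_zero⟩ := hsupp τ hτ x hx
  constructor
  · simp [chargeDensity, huP_zero, huM_zero]
  · ext k
    simp [chargeDensity, huP_zero, huM_zero]

end Conservation

section GroupVelocity

lemma differentiable_omegaP : Differentiable ℝ omegaP := by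
  refine differentiable_pi.2 fun k g => ?_
  unfold omegaP
  have hsq_pos : 0 < 1 + ∑ j, g j ^ 2 := by positivity
  have hsqrt_ne : Real.sqrt (1 + ∑ j, g j ^ 2) ≠ 0 := (Real.sqrt_pos.2 hsq_pos).ne'
  fun_prop (disch := positivity)

lemma differentiable_omegaM : Differentiable ℝ omegaM :=
  differentiable_omegaP.neg

lemma differentiableOn_of_eq_spatial_fderiv {n : ℕ} {Ω : Set (ℝ × (Fin n → ℝ))} (hΩ : IsOpen Ω)
    {φ : ℝ × (Fin n → ℝ) → ℝ} (hφ : ContDiffOn ℝ 2 φ Ω) {gradφ : ℝ × (Fin n → ℝ) → Fin n → ℝ}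
    (hgrad : ∀ p ∈ Ω, ∀ k, gradφ p k = fderiv ℝ φ p (0, Pi.single k 1)) :
    DifferentiableOn ℝ gradφ Ω := by
  have hfderiv : DifferentiableOn ℝ (fderiv ℝ φ) Ω :=
    (hφ.fderiv_of_isOpen hΩ (m := 1) (by norm_num)).differentiableOn one_ne_zero
  exact differentiableOn_pi.2 fun k =>
    (hfderiv.clm_apply (differentiableOn_const _)).congr fun p hp => hgrad p hp k

lemma re_transport_coefficient (α V δ : ℝ) :
    (Complex.I * (α : ℂ) - Complex.I * (V : ℂ) - (1 / 2 : ℂ) * (δ : ℂ)).re = -(1 / 2) * δ := by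
  simp

end GroupVelocity

/-- If u± solve the transport equations ∂ₜu± + (ω±(∇φ)·∇)u± = Γ±u± on an open
    set Ω, with Γ± = i a·ω±(∇φ) − iV − ½div(ω±(∇φ)), then the continuity
    equation ∂ₜ(|uP|² + |uM|²) + div(ω₊(∇φ)|uP|² + ω₋(∇φ)|uM|²) = 0 holds
    pointwise on Ω; in particular, for solutions compactly supported in x
    (with Ω the whole space-time), the total charge
    ∫(|uP(t,x)|² + |uM(t,x)|²)dx is conserved. -/
theorem transport_continuity_and_charge_conservation
    (Ω : Set (ℝ × (Fin 3 → ℝ))) (hΩ : IsOpen Ω)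
    (φ : ℝ × (Fin 3 → ℝ) → ℝ) (hφ : ContDiffOn ℝ 2 φ Ω)
    (a : ℝ × (Fin 3 → ℝ) → Fin 3 → ℝ) (V : ℝ × (Fin 3 → ℝ) → ℝ)
    (uP uM : ℝ × (Fin 3 → ℝ) → Fin 4 → ℂ)
    (huP : DifferentiableOn ℝ uP Ω) (huM : DifferentiableOn ℝ uM Ω)
    -- the spatial gradient of the phase
    (gradφ : ℝ × (Fin 3 → ℝ) → Fin 3 → ℝ)
    (hgrad : ∀ p ∈ Ω, ∀ k : Fin 3, gradφ p k = fderiv ℝ φ p (0, Pi.single k 1))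
    -- the coefficients Γ± = i a·ω±(∇φ) − iV − ½ div(ω±(∇φ))
    (ΓP ΓM : ℝ × (Fin 3 → ℝ) → ℂ)
    (hΓP : ∀ p ∈ Ω, ΓP p
      = Complex.I * ((∑ k, a p k * omegaP (gradφ p) k : ℝ) : ℂ)
        - Complex.I * (V p : ℂ)
        - (1 / 2 : ℂ) * ((∑ k, fderiv ℝ (fun q => omegaP (gradφ q) k) p
            (0, Pi.single k 1) : ℝ) : ℂ))
    (hΓM : ∀ p ∈ Ω, ΓM p
      = Complex.I * ((∑ k, a p k * omegaM (gradφ p) k : ℝ) : ℂ)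
        - Complex.I * (V p : ℂ)
        - (1 / 2 : ℂ) * ((∑ k, fderiv ℝ (fun q => omegaM (gradφ q) k) p
            (0, Pi.single k 1) : ℝ) : ℂ))
    -- the transport equations ∂ₜu± + (ω±(∇φ)·∇)u± = Γ± u±
    (htp : ∀ p ∈ Ω,
      fderiv ℝ uP p (1, 0)
        + ∑ k, omegaP (gradφ p) k • fderiv ℝ uP p (0, Pi.single k 1)
        = ΓP p • uP p)
    (htm : ∀ p ∈ Ω,
      fderiv ℝ uM p (1, 0)
        + ∑ k, omegaM (gradφ p) k • fderiv ℝ uM p (0, Pi.single k 1)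
        = ΓM p • uM p) :
    -- the continuity equation holds pointwise on Ω ...
    (∀ p ∈ Ω,
      fderiv ℝ (fun q => (∑ i, Complex.normSq (uP q i)) + ∑ i, Complex.normSq (uM q i))
          p (1, 0)
        + ∑ k, fderiv ℝ (fun q =>
              omegaP (gradφ q) k * (∑ i, Complex.normSq (uP q i))
                + omegaM (gradφ q) k * (∑ i, Complex.normSq (uM q i)))
            p (0, Pi.single k 1)
        = 0) ∧
    -- ... and in particular, for solutions compactly supported in x, the total
    -- charge is conserved
    (Ω = Set.univ →
      (∀ T : ℝ, 0 ≤ T → ∃ R : ℝ, ∀ (t : ℝ) (x : Fin 3 → ℝ),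
        |t| ≤ T → R ≤ ‖x‖ → uP (t, x) = 0 ∧ uM (t, x) = 0) →
      ∀ t₁ t₂ : ℝ,
        ∫ x : Fin 3 → ℝ, ((∑ i, Complex.normSq (uP (t₁, x) i))
            + ∑ i, Complex.normSq (uM (t₁, x) i))
          = ∫ x : Fin 3 → ℝ, ((∑ i, Complex.normSq (uP (t₂, x) i))
            + ∑ i, Complex.normSq (uM (t₂, x) i))) := by
  have hgradφ := differentiableOn_of_eq_spatial_fderiv hΩ hφ hgrad
  obtain ⟨hcont, hcharge⟩ := transport_continuity_and_charge_conservation_general hΩ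
    (differentiable_omegaP.comp_differentiableOn hgradφ)
    (differentiable_omegaM.comp_differentiableOn hgradφ) huP huM
    (fun p hp => hΓP p hp ▸ re_transport_coefficient _ _ _)
    (fun p hp => hΓM p hp ▸ re_transport_coefficient _ _ _) htp htm
  refine ⟨fun p hp => (hcont p hp).fderiv_add_spatialDiv, fun hΩ_univ hsupp t₁ t₂ => ?_⟩
  obtain ⟨R, hR⟩ := hsupp (max |t₁| |t₂|) (le_max_of_le_left (abs_nonneg t₁))
  have htime : Set.uIcc t₁ t₂ ⊆ Set.Icc (-max |t₁| |t₂|) (max |t₁| |t₂|) :=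
    Set.uIcc_subset_Icc (abs_le.1 (le_max_left _ _)) (abs_le.1 (le_max_right _ _))
  exact hcharge t₁ t₂ R (hΩ_univ ▸ Set.subset_univ _)
    fun τ hτ x hx => hR τ x (abs_le.2 (htime hτ)) hx

end
end

section
/- Let φ_I : ℝ³ → ℝ be smooth (C^∞) with uniformly bounded Hessian, i.e. there exists C such that ‖D²φ_I(x)‖ ≤ C for all x ∈ ℝ³. Then there exists T₊ > 0 and a uniquely determined smooth function φ₊ : [0,T₊) × ℝ³ → ℝ solving the relativistic Hamilton–Jacobi (eikonal) equation ∂ₜφ₊(t,x) = √(1 + |∇φ₊(t,x)|²) for all (t,x) ∈ [0,T₊) × ℝ³ with initial datum φ₊(0,·) = φ_I; in particular (∂ₜφ₊)² − |∇φ₊|² = 1 on the slab. The same holds with the Hamiltonian −√(1+|∇φ|²) in place of √(1+|∇φ|²). -/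
noncomputable section

open Set

/-! Characteristics: a solution of `∂ₜφ = H(∇φ)` with datum `f` carries the constant gradient
`∇f(y)` along the straight line `t ↦ y - t ∇H(∇f(y))`, on which it is affine in `t`. When
`∇H ∘ ∇f` is `K`-Lipschitz and `T K < 1`, the contraction principle shows that for `|t| < T`
exactly one of these lines passes through each `(t, x)`, and the implicit function theorem makes its
foot `y` a smooth function of `(t, x)`; reading off the value along the line defines `φ`.

Uniqueness is finite propagation speed: if `H` is `L`-Lipschitz, the difference `w` of two solutions
satisfies `∂ₜw ≤ L |∇w|`, so on a backward light cone of slope `L` it is largest at time zero. -/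

section SpaceTimeForm

variable {E : Type*} [NormedAddCommGroup E] [InnerProductSpace ℝ E]

/-- The linear form `(s, ξ) ↦ a s + ⟪p, ξ⟫` on space-time: the derivative of a function with time
derivative `a` and spatial gradient `p`. -/
def spaceTimeForm (a : ℝ) (p : E) : ℝ × E →L[ℝ] ℝ :=
  a • ContinuousLinearMap.fst ℝ ℝ E + innerSL ℝ p ∘L ContinuousLinearMap.snd ℝ ℝ E

@[simp]
theorem spaceTimeForm_apply (a : ℝ) (p : E) (z : ℝ × E) :
    spaceTimeForm a p z = a * z.1 + inner ℝ p z.2 := by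
  simp [spaceTimeForm]

theorem spaceTimeForm_sub (a b : ℝ) (p q : E) :
    spaceTimeForm a p - spaceTimeForm b q = spaceTimeForm (a - b) (p - q) := by
  ext <;> simp [inner_sub_left]

theorem exists_spaceTimeForm_eq [CompleteSpace E] (A : ℝ × E →L[ℝ] ℝ) :
    ∃ p, spaceTimeForm (A (1, 0)) p = A := by
  refine ⟨(InnerProductSpace.toDual ℝ E).symm (A ∘L ContinuousLinearMap.inr ℝ ℝ E), ?_⟩
  ext <;> simp

/-- `φ` is a classical solution of `∂ₜφ = H(∇φ)` at every point of `s`. The derivative is the full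
one even at boundary points of `s`. -/
def IsHamiltonJacobiSolutionOn (H : E → ℝ) (φ : ℝ × E → ℝ) (s : Set (ℝ × E)) : Prop :=
  ∀ z ∈ s, ∃ p, HasFDerivAt φ (spaceTimeForm (H p) p) z

theorem IsHamiltonJacobiSolutionOn.mono {H : E → ℝ} {φ : ℝ × E → ℝ} {s t : Set (ℝ × E)}
    (h : IsHamiltonJacobiSolutionOn H φ t) (hst : s ⊆ t) : IsHamiltonJacobiSolutionOn H φ s :=
  fun z hz => h z (hst hz)

end SpaceTimeForm

section BackwardCone

variable {E : Type*} [NormedAddCommGroup E]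

/-- The backward light cone of slope `L` with vertex `(t, x)`, cut off at time zero. -/
def backwardCone (L : NNReal) (t : ℝ) (x : E) : Set (ℝ × E) :=
  {z | z.1 ∈ Icc 0 t ∧ dist z.2 x ≤ L * (t - z.1)}

theorem vertex_mem_backwardCone (L : NNReal) {t : ℝ} (ht : 0 ≤ t) (x : E) :
    (t, x) ∈ backwardCone L t x :=
  ⟨⟨ht, le_rfl⟩, by simp⟩

theorem isCompact_backwardCone [ProperSpace E] (L : NNReal) (t : ℝ) (x : E) :
    IsCompact (backwardCone L t x) := by
  have hclosed : IsClosed (backwardCone L t x) :=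
    (isClosed_Icc.preimage continuous_fst).inter
      (isClosed_le (f := fun z : ℝ × E => dist z.2 x) (g := fun z => L * (t - z.1))
        (by fun_prop) (by fun_prop))
  have hsubset : backwardCone L t x ⊆ Icc 0 t ×ˢ Metric.closedBall x (L * t) := fun z hz =>
    ⟨hz.1, hz.2.trans (mul_le_mul_of_nonneg_left (sub_le_self t hz.1.1) L.coe_nonneg)⟩
  exact (isCompact_Icc.prod (isCompact_closedBall x _)).of_isClosed_subset hclosed hsubset

theorem mem_posTangentConeAt_backwardCone [NormedSpace ℝ E] {L : NNReal} {t : ℝ} {x : E}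
    {z : ℝ × E} (hz : z ∈ backwardCone L t x) (hz0 : 0 < z.1) {e : E} (he : ‖e‖ ≤ L) :
    (-1, e) ∈ posTangentConeAt (backwardCone L t x) z := by
  obtain ⟨s, y⟩ := z
  obtain ⟨⟨-, hst⟩, hy⟩ := hz
  refine mem_posTangentConeAt_of_frequently_mem (Filter.Eventually.frequently ?_)
  filter_upwards [Ioo_mem_nhdsGT hz0] with τ ⟨hτ, hτs⟩
  have hdist : dist (y + τ • e) x ≤ L * (t - (s - τ)) :=
    calc dist (y + τ • e) x ≤ ‖τ • e‖ + dist y x := by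
          simpa using dist_triangle (y + τ • e) y x
      _ ≤ τ * L + L * (t - s) := by
          rw [norm_smul, Real.norm_of_nonneg hτ.le]
          gcongr
      _ = L * (t - (s - τ)) := by ring
  refine ⟨⟨?_, ?_⟩, ?_⟩
  · simpa using hτs.le
  · simpa using by linarith
  · simpa [← sub_eq_add_neg] using hdist

end BackwardCone

section Comparison

variable {E : Type*} [NormedAddCommGroup E] [InnerProductSpace ℝ E]

theorem exists_norm_le_inner_eq_mul_norm (L : NNReal) (p : E) :
    ∃ e : E, ‖e‖ ≤ L ∧ inner ℝ p e = L * ‖p‖ := by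
  refine ⟨(L : ℝ) • ‖p‖⁻¹ • p, ?_, ?_⟩
  · rw [norm_smul, norm_smul, norm_inv, norm_norm, NNReal.norm_eq]
    exact mul_le_of_le_one_right L.coe_nonneg inv_mul_le_one
  · rw [inner_smul_right, inner_smul_right, real_inner_self_eq_norm_mul_norm, ← mul_assoc ‖p‖⁻¹,
      inv_mul_mul_self]

variable [ProperSpace E] {L : NNReal} {T : ℝ}

theorem nonpos_of_timeDeriv_lt_mul_norm_gradient {w : ℝ × E → ℝ}
    (hw : ∀ z ∈ Ico 0 T ×ˢ univ,
      ∃ a p, HasFDerivAt w (spaceTimeForm a p) z ∧ a < L * ‖p‖)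
    (h0 : ∀ x, w (0, x) ≤ 0) {t : ℝ} (ht : t ∈ Ico 0 T) (x : E) : w (t, x) ≤ 0 := by
  have hsub : backwardCone L t x ⊆ Ico 0 T ×ˢ univ := fun z hz =>
    ⟨⟨hz.1.1, hz.1.2.trans_lt ht.2⟩, mem_univ _⟩
  have hcont : ContinuousOn w (backwardCone L t x) := fun z hz =>
    let ⟨_, _, hd, _⟩ := hw z (hsub hz)
    hd.continuousAt.continuousWithinAt
  have hvertex := vertex_mem_backwardCone L ht.1 x
  obtain ⟨z, hz, hmax⟩ := (isCompact_backwardCone L t x).exists_isMaxOn ⟨_, hvertex⟩ hcont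
  rcases hz.1.1.eq_or_lt with hz0 | hz0
  · calc w (t, x) ≤ w z := hmax hvertex
      _ = w (0, z.2) := by rw [hz0]
      _ ≤ 0 := h0 z.2
  · obtain ⟨a, p, hd, ha⟩ := hw z (hsub hz)
    obtain ⟨e, he, hpe⟩ := exists_norm_le_inner_eq_mul_norm L p
    have hdir : spaceTimeForm a p (-1, e) ≤ 0 :=
      hmax.localize.hasFDerivWithinAt_nonpos hd.hasFDerivWithinAt
        (mem_posTangentConeAt_backwardCone hz hz0 he)
    rw [spaceTimeForm_apply, hpe] at hdir
    linarith

theorem nonpos_of_timeDeriv_le_mul_norm_gradient {w : ℝ × E → ℝ}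
    (hw : ∀ z ∈ Ico 0 T ×ˢ univ,
      ∃ a p, HasFDerivAt w (spaceTimeForm a p) z ∧ a ≤ L * ‖p‖)
    (h0 : ∀ x, w (0, x) ≤ 0) {t : ℝ} (ht : t ∈ Ico 0 T) (x : E) : w (t, x) ≤ 0 := by
  have hpenalized : ∀ ε > 0, w (t, x) - ε * t ≤ 0 := fun ε hε => by
    refine nonpos_of_timeDeriv_lt_mul_norm_gradient (L := L) (w := fun z => w z - ε * z.1)
      (fun z hz => ?_) (by simpa using h0) ht x
    obtain ⟨a, p, hd, ha⟩ := hw z hz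
    refine ⟨a - ε, p, ?_, by linarith⟩
    convert! hd.sub (hasFDerivAt_fst.const_mul ε) using 1
    ext <;> simp
  have hlim : Filter.Tendsto (fun ε => w (t, x) - ε * t) (nhdsWithin 0 (Ioi 0))
      (nhds (w (t, x) - 0 * t)) :=
    Continuous.tendsto' (by fun_prop) _ _ rfl |>.mono_left nhdsWithin_le_nhds
  simpa using le_of_tendsto hlim (eventually_mem_nhdsWithin.mono hpenalized)

variable {H : E → ℝ} {φ ψ : ℝ × E → ℝ}

theorem IsHamiltonJacobiSolutionOn.le (hψ : IsHamiltonJacobiSolutionOn H ψ (Ico 0 T ×ˢ univ))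
    (hφ : IsHamiltonJacobiSolutionOn H φ (Ico 0 T ×ˢ univ)) (hH : LipschitzWith L H)
    (h0 : ∀ x, ψ (0, x) ≤ φ (0, x)) {z : ℝ × E} (hz : z ∈ Ico 0 T ×ˢ univ) : ψ z ≤ φ z := by
  refine sub_nonpos.1 (nonpos_of_timeDeriv_le_mul_norm_gradient (L := L)
    (w := fun z => ψ z - φ z) (fun z hz => ?_) (fun x => sub_nonpos.2 (h0 x)) hz.1 z.2)
  obtain ⟨q, hq⟩ := hψ z hz
  obtain ⟨p, hp⟩ := hφ z hz
  refine ⟨H q - H p, q - p, ?_, (le_abs_self _).trans (hH.norm_sub_le q p)⟩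
  rw [← spaceTimeForm_sub]
  exact hq.sub hp

theorem IsHamiltonJacobiSolutionOn.eqOn (hψ : IsHamiltonJacobiSolutionOn H ψ (Ico 0 T ×ˢ univ))
    (hφ : IsHamiltonJacobiSolutionOn H φ (Ico 0 T ×ˢ univ)) (hH : LipschitzWith L H)
    (h0 : ∀ x, ψ (0, x) = φ (0, x)) : EqOn ψ φ (Ico 0 T ×ˢ univ) := fun _ hz =>
  le_antisymm (hψ.le hφ hH (fun x => (h0 x).le) hz) (hφ.le hψ hH (fun x => (h0 x).ge) hz)

end Comparison

section CharacteristicFoot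

variable {E : Type*} [NormedAddCommGroup E] [NormedSpace ℝ E] [CompleteSpace E]
  {v : E → E} {K : NNReal} {t : ℝ}

theorem existsUnique_eq_add_smul (hv : LipschitzWith K v) (ht : |t| * K < 1) (x : E) :
    ∃! y, y = x + t • v y := by
  have hcontr : ContractingWith (‖t‖₊ * K) fun y => x + t • v y := by
    refine ⟨by simpa [← NNReal.coe_lt_coe] using ht, LipschitzWith.of_dist_le_mul fun y y' => ?_⟩
    rw [dist_add_left, dist_smul₀, NNReal.coe_mul, mul_assoc, coe_nnnorm]
    gcongr
    exact hv.dist_le_mul y y'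
  exact ⟨hcontr.fixedPoint, hcontr.fixedPoint_isFixedPt.symm,
    fun y hy => hcontr.fixedPoint_unique hy.symm⟩

theorem isInvertible_id_sub_smul_fderiv (hv : LipschitzWith K v) (ht : |t| * K < 1) (y : E) :
    (ContinuousLinearMap.id ℝ E - t • fderiv ℝ v y).IsInvertible := by
  have hnorm : ‖t • fderiv ℝ v y‖ < 1 := by
    rw [norm_smul, Real.norm_eq_abs]
    refine lt_of_le_of_lt ?_ ht
    gcongr
    exact norm_fderiv_le_of_lipschitz ℝ hv
  obtain ⟨u, hu⟩ := isUnit_one_sub_of_norm_lt_one hnorm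
  exact ⟨ContinuousLinearEquiv.unitsEquiv ℝ E u, hu⟩

theorem contDiffAt_of_eq_add_smul {n : WithTop ℕ∞} (hn : n ≠ 0)
    (hv : LipschitzWith K v) (hvn : ContDiff ℝ n v) {Y : ℝ × E → E}
    (hY : ∀ z : ℝ × E, |z.1| * K < 1 → Y z = z.2 + z.1 • v (Y z)) {z : ℝ × E}
    (hz : |z.1| * K < 1) : ContDiffAt ℝ n Y z := by
  set F : (ℝ × E) × E → E := fun u => u.2 - (u.1.2 + u.1.1 • v u.2)
  have hFn : ContDiff ℝ n F := by fun_prop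
  have hFz : F (z, Y z) = 0 := sub_eq_zero.2 (hY z hz)
  have hpartial : fderiv ℝ F (z, Y z) ∘L .inr ℝ (ℝ × E) E
      = .id ℝ E - z.1 • fderiv ℝ v (Y z) := by
    have hslice : HasFDerivAt (fun y => F (z, y)) (.id ℝ E - z.1 • fderiv ℝ v (Y z)) (Y z) :=
      (hasFDerivAt_id _).sub
        ((((hvn.differentiable hn) _).hasFDerivAt.const_smul z.1).const_add z.2)
    exact (((hFn.differentiable hn) (z, Y z)).hasFDerivAt.comp (Y z)
      (hasFDerivAt_prodMk_right z (Y z))).unique hslice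
  have hinv : (fderiv ℝ F (z, Y z) ∘L .inr ℝ (ℝ × E) E).IsInvertible :=
    hpartial ▸ isInvertible_id_sub_smul_fderiv hv hz (Y z)
  refine (hFn.contDiffAt.contDiffAt_implicitFunction hn hinv).congr_of_eventuallyEq ?_
  have hnear : ∀ᶠ z' : ℝ × E in nhds z, |z'.1| * K < 1 :=
    (isOpen_lt (by fun_prop) continuous_const).mem_nhds hz
  filter_upwards [hnear, hFn.contDiffAt.eventually_apply_implicitFunction hn hinv]
    with z' hz' himplicit
  exact (existsUnique_eq_add_smul hv hz' z'.2).unique (hY z' hz')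
    (sub_eq_zero.1 (himplicit.trans hFz))

end CharacteristicFoot

section Gradient

open scoped Gradient

variable {E : Type*} [NormedAddCommGroup E] [InnerProductSpace ℝ E] [CompleteSpace E] {f : E → ℝ}

theorem contDiff_gradient {m n : WithTop ℕ∞} (hf : ContDiff ℝ n f) (hmn : m + 1 ≤ n) :
    ContDiff ℝ m (∇ f) :=
  (InnerProductSpace.toDual ℝ E).symm.toContinuousLinearEquiv.contDiff.comp (hf.fderiv_right hmn)

theorem lipschitzWith_gradient_of_norm_fderiv_fderiv_le (hf : ContDiff ℝ 2 f) {C : ℝ}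
    (hC : ∀ x, ‖fderiv ℝ (fderiv ℝ f) x‖ ≤ C) : LipschitzWith C.toNNReal (∇ f) := by
  have hfderiv : LipschitzWith C.toNNReal (fderiv ℝ f) :=
    lipschitzWith_of_nnnorm_fderiv_le
      ((hf.fderiv_right (m := 1) (by norm_num)).differentiable one_ne_zero)
      fun x => NNReal.coe_le_coe.1 ((hC x).trans (Real.le_coe_toNNReal C))
  have hgradient := (InnerProductSpace.toDual ℝ E).symm.lipschitz.comp hfderiv
  rwa [one_mul] at hgradient

end Gradient

section Characteristics

open scoped Gradient

variable {E : Type*} [NormedAddCommGroup E] [InnerProductSpace ℝ E] [CompleteSpace E]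
  {H f : E → ℝ} {y : E}

/-- For the equation `∂ₜφ = H(∇φ)` with datum `f`, the characteristic issuing from `y` is the line
`t ↦ y - t • characteristicVelocity H f y`. -/
def characteristicVelocity (H f : E → ℝ) (y : E) : E := ∇ H (∇ f y)

/-- The rate of change of a solution of `∂ₜφ = H(∇φ)` with datum `f` along the characteristic
issuing from `y`. -/
def characteristicRate (H f : E → ℝ) (y : E) : ℝ :=
  H (∇ f y) - inner ℝ (∇ f y) (characteristicVelocity H f y)

theorem contDiff_characteristicVelocity {m n : WithTop ℕ∞} (hH : ContDiff ℝ n H)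
    (hf : ContDiff ℝ n f) (hmn : m + 1 ≤ n) : ContDiff ℝ m (characteristicVelocity H f) :=
  (contDiff_gradient hH hmn).comp (contDiff_gradient hf hmn)

theorem contDiff_characteristicRate {m n : WithTop ℕ∞} (hH : ContDiff ℝ n H)
    (hf : ContDiff ℝ n f) (hmn : m + 1 ≤ n) : ContDiff ℝ m (characteristicRate H f) :=
  ((hH.of_le (le_self_add.trans hmn)).comp (contDiff_gradient hf hmn)).sub
    ((contDiff_gradient hf hmn).inner ℝ (contDiff_characteristicVelocity hH hf hmn))

-- The second derivatives of `f` cancel because `H(p) - ⟪p, V⟫` is stationary in `p` at `V = ∇H(p)`.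
theorem hasFDerivAt_characteristicRate (hH : DifferentiableAt ℝ H (∇ f y))
    (hf : DifferentiableAt ℝ (∇ f) y) (hv : DifferentiableAt ℝ (characteristicVelocity H f) y) :
    HasFDerivAt (characteristicRate H f)
      (-(innerSL ℝ (∇ f y) ∘L fderiv ℝ (characteristicVelocity H f) y)) y := by
  have h := (hH.hasGradientAt.hasFDerivAt.comp y hf.hasFDerivAt).sub
    (hf.hasFDerivAt.inner ℝ hv.hasFDerivAt)
  convert! h using 1
  ext w
  simp [characteristicVelocity]

theorem hasFDerivAt_add_mul_characteristicRate {Y : ℝ × E → E} {Y' : ℝ × E →L[ℝ] E}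
    {z : ℝ × E} (hY : HasFDerivAt Y Y' z)
    (hYz : ∀ᶠ z' in nhds z, Y z' = z'.2 + z'.1 • characteristicVelocity H f (Y z'))
    (hf : DifferentiableAt ℝ f (Y z)) (hH : DifferentiableAt ℝ H (∇ f (Y z)))
    (hp : DifferentiableAt ℝ (∇ f) (Y z))
    (hv : DifferentiableAt ℝ (characteristicVelocity H f) (Y z)) :
    HasFDerivAt (fun z => f (Y z) + z.1 * characteristicRate H f (Y z))
      (spaceTimeForm (H (∇ f (Y z))) (∇ f (Y z))) z := by
  have hY' : Y' = .snd ℝ ℝ E + (z.1 • (fderiv ℝ (characteristicVelocity H f) (Y z) ∘L Y') +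
      (ContinuousLinearMap.fst ℝ ℝ E).smulRight (characteristicVelocity H f (Y z))) :=
    hY.unique <| HasFDerivAt.congr_of_eventuallyEq
      (hasFDerivAt_snd.add (hasFDerivAt_fst.smul (hv.hasFDerivAt.comp z hY))) hYz
  have hvalue := (hf.hasGradientAt.hasFDerivAt.comp z hY).add
    ((hasFDerivAt_fst (𝕜 := ℝ) (p := z)).mul
      ((hasFDerivAt_characteristicRate hH hp hv).comp z hY))
  convert! hvalue using 1
  refine ContinuousLinearMap.ext fun u => ?_
  have hu : inner ℝ (∇ f (Y z)) (Y' u) = inner ℝ (∇ f (Y z)) u.2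
      + (z.1 * inner ℝ (∇ f (Y z)) (fderiv ℝ (characteristicVelocity H f) (Y z) (Y' u))
        + u.1 * inner ℝ (∇ f (Y z)) (characteristicVelocity H f (Y z))) := by
    conv_lhs => rw [hY']
    simp [inner_add_right, inner_smul_right, -inner_gradient_left]
  simp only [spaceTimeForm_apply, ContinuousLinearMap.neg_comp, smul_neg, Function.comp_apply,
    characteristicRate, add_apply, ContinuousLinearMap.comp_apply,
    InnerProductSpace.toDual_apply_apply, hu, neg_apply, smul_apply, coe_innerSL_apply,
    smul_eq_mul, ContinuousLinearMap.coe_fst']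
  ring

theorem exists_contDiffOn_isHamiltonJacobiSolutionOn {m n : WithTop ℕ∞} (hm : m ≠ 0)
    (hmn : m + 1 ≤ n) (hH : ContDiff ℝ n H) (hf : ContDiff ℝ n f) {K : NNReal}
    (hv : LipschitzWith K (characteristicVelocity H f)) {T : ℝ} (hT : T * K < 1) :
    ∃ φ : ℝ × E → ℝ, ContDiffOn ℝ m φ (Ioo (-T) T ×ˢ univ) ∧
      IsHamiltonJacobiSolutionOn H φ (Ioo (-T) T ×ˢ univ) ∧ ∀ x, φ (0, x) = f x := by
  have hvm := contDiff_characteristicVelocity hH hf hmn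
  have hn : n ≠ 0 := by
    rintro rfl
    simp at hmn
  choose! Y hY using fun (z : ℝ × E) (hz : |z.1| * K < 1) =>
    (existsUnique_eq_add_smul hv hz z.2).exists
  have hstrip : ∀ z ∈ Ioo (-T) T ×ˢ (univ : Set E), |z.1| * K < 1 := fun z hz =>
    (mul_le_mul_of_nonneg_right (abs_lt.2 hz.1).le K.coe_nonneg).trans_lt hT
  have hYm : ∀ z ∈ Ioo (-T) T ×ˢ univ, ContDiffAt ℝ m Y z := fun z hz =>
    contDiffAt_of_eq_add_smul hm hv hvm hY (hstrip z hz)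
  refine ⟨fun z => f (Y z) + z.1 * characteristicRate H f (Y z), fun z hz => ?_, fun z hz => ?_,
    fun x => ?_⟩
  · have hfm : ContDiff ℝ m f := hf.of_le (le_self_add.trans hmn)
    exact (((hfm.contDiffAt.comp z (hYm z hz)).add (contDiffAt_fst.mul
      ((contDiff_characteristicRate hH hf hmn).contDiffAt.comp z (hYm z hz))))).contDiffWithinAt
  · have hnear : ∀ᶠ z' in nhds z, z' ∈ Ioo (-T) T ×ˢ (univ : Set E) :=
      (isOpen_Ioo.prod isOpen_univ).mem_nhds hz
    exact ⟨_, hasFDerivAt_add_mul_characteristicRate ((hYm z hz).differentiableAt hm).hasFDerivAt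
      (hnear.mono fun z' hz' => hY z' (hstrip z' hz'))
      (hf.differentiable hn _) (hH.differentiable hn _)
      ((contDiff_gradient hf hmn).differentiable hm _) (hvm.differentiable hm _)⟩
  · have hY0 : Y (0, x) = x := by simpa using hY (0, x) (by simp)
    simp [hY0]

end Characteristics

theorem hamiltonJacobi_exists_contDiffOn_eqOn {E : Type*} [NormedAddCommGroup E]
    [InnerProductSpace ℝ E] [ProperSpace E] {m n : WithTop ℕ∞} (hm : m ≠ 0) (hmn : m + 1 ≤ n)
    {H f : E → ℝ} (hH : ContDiff ℝ n H) (hf : ContDiff ℝ n f) {L K : NNReal}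
    (hL : LipschitzWith L H) (hv : LipschitzWith K (characteristicVelocity H f)) :
    ∃ T : ℝ, 0 < T ∧ ∃ φ : ℝ × E → ℝ, ContDiffOn ℝ m φ (Ico 0 T ×ˢ univ) ∧
      IsHamiltonJacobiSolutionOn H φ (Ico 0 T ×ˢ univ) ∧ (∀ x, φ (0, x) = f x) ∧
      ∀ ψ, IsHamiltonJacobiSolutionOn H ψ (Ico 0 T ×ˢ univ) → (∀ x, ψ (0, x) = f x) →
        EqOn ψ φ (Ico 0 T ×ˢ univ) := by
  have hT : 0 < ((K : ℝ) + 1)⁻¹ := by positivity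
  have hTK : ((K : ℝ) + 1)⁻¹ * K < 1 := (inv_mul_lt_one₀ (by positivity)).2 (lt_add_one _)
  obtain ⟨φ, hφm, hφ, hφ0⟩ := exists_contDiffOn_isHamiltonJacobiSolutionOn hm hmn hH hf hv hTK
  have hslab : Ico 0 ((K : ℝ) + 1)⁻¹ ×ˢ (univ : Set E) ⊆ Ioo (-((K : ℝ) + 1)⁻¹) _ ×ˢ univ :=
    prod_mono (fun t ht => ⟨(neg_lt_zero.2 hT).trans_le ht.1, ht.2⟩) Subset.rfl
  exact ⟨_, hT, φ, hφm.mono hslab, hφ.mono hslab, hφ0, fun ψ hψ hψ0 =>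
    hψ.eqOn (hφ.mono hslab) hL fun x => (hψ0 x).trans (hφ0 x).symm⟩

section RelativisticEnergy

/-- The relativistic energy `√(1 + |p|²)` of a particle of unit mass and momentum `p`. -/
def relativisticEnergy {E : Type*} [Norm E] (p : E) : ℝ := √(1 + ‖p‖ ^ 2)

section Seminormed

variable {E : Type*} [SeminormedAddCommGroup E]

theorem one_le_relativisticEnergy (p : E) : 1 ≤ relativisticEnergy p :=
  Real.one_le_sqrt.2 (le_add_of_nonneg_right (sq_nonneg _))

theorem relativisticEnergy_pos (p : E) : 0 < relativisticEnergy p :=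
  one_pos.trans_le (one_le_relativisticEnergy p)

theorem norm_le_relativisticEnergy (p : E) : ‖p‖ ≤ relativisticEnergy p :=
  Real.le_sqrt_of_sq_le (le_add_of_nonneg_left zero_le_one)

theorem relativisticEnergy_eq_norm_toLp (p : E) :
    relativisticEnergy p = ‖WithLp.toLp 2 ((1 : ℝ), p)‖ := by
  simp [relativisticEnergy, WithLp.prod_norm_eq_of_L2]

theorem lipschitzWith_relativisticEnergy : LipschitzWith 1 (relativisticEnergy : E → ℝ) := by
  refine LipschitzWith.of_dist_le_mul fun p q => ?_
  calc dist (relativisticEnergy p) (relativisticEnergy q)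
      ≤ ‖WithLp.toLp 2 ((1 : ℝ), p) - WithLp.toLp 2 ((1 : ℝ), q)‖ := by
        rw [relativisticEnergy_eq_norm_toLp, relativisticEnergy_eq_norm_toLp]
        exact abs_norm_sub_norm_le _ _
    _ = (1 : NNReal) * dist p q := by
        simp [← WithLp.toLp_sub, dist_eq_norm]

theorem lipschitzWith_const_mul_relativisticEnergy (σ : ℝ) :
    LipschitzWith ‖σ‖₊ fun p : E => σ * relativisticEnergy p := by
  have h := (lipschitzWith_smul σ).comp (lipschitzWith_relativisticEnergy (E := E))
  rwa [mul_one] at h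

theorem lipschitzWith_inv_relativisticEnergy_smul [NormedSpace ℝ E] :
    LipschitzWith 2 fun p : E => (relativisticEnergy p)⁻¹ • p := by
  refine LipschitzWith.of_dist_le_mul fun p q => ?_
  set V : E → E := fun p => (relativisticEnergy p)⁻¹ • p
  have henergy : ∀ p : E, relativisticEnergy p • V p = p := fun p =>
    smul_inv_smul₀ (relativisticEnergy_pos p).ne' p
  have hVq : ‖V q‖ ≤ 1 := by
    rw [norm_smul, norm_inv, Real.norm_of_nonneg (relativisticEnergy_pos q).le,
      inv_mul_le_one₀ (relativisticEnergy_pos q)]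
    exact norm_le_relativisticEnergy q
  have hsplit : relativisticEnergy p • (V p - V q)
      = p - q - (relativisticEnergy p - relativisticEnergy q) • V q := by
    rw [smul_sub, sub_smul, henergy, henergy]
    abel
  have hlip : ‖relativisticEnergy p - relativisticEnergy q‖ ≤ ‖p - q‖ := by
    simpa using lipschitzWith_relativisticEnergy.norm_sub_le p q
  rw [dist_eq_norm, dist_eq_norm]
  calc ‖V p - V q‖ ≤ ‖relativisticEnergy p • (V p - V q)‖ := by
        rw [norm_smul, Real.norm_of_nonneg (relativisticEnergy_pos p).le]
        exact le_mul_of_one_le_left (norm_nonneg _) (one_le_relativisticEnergy p)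
    _ ≤ ‖p - q‖ + ‖relativisticEnergy p - relativisticEnergy q‖ * ‖V q‖ := by
        rw [hsplit, ← norm_smul]
        exact norm_sub_le _ _
    _ ≤ ‖p - q‖ + ‖p - q‖ * 1 := by gcongr
    _ = (2 : NNReal) * ‖p - q‖ := by
        rw [NNReal.coe_ofNat]
        ring

end Seminormed

open scoped Gradient

variable {E : Type*} [NormedAddCommGroup E] [InnerProductSpace ℝ E]

theorem contDiff_relativisticEnergy {n : WithTop ℕ∞} :
    ContDiff ℝ n (relativisticEnergy : E → ℝ) :=
  (contDiff_const.add (contDiff_norm_sq ℝ)).sqrt fun p => by positivity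

theorem hasGradientAt_relativisticEnergy [CompleteSpace E] (p : E) :
    HasGradientAt relativisticEnergy ((relativisticEnergy p)⁻¹ • p) p := by
  have h := ((hasStrictFDerivAt_norm_sq p).hasFDerivAt.const_add 1).sqrt (by positivity)
  rw [hasGradientAt_iff_hasFDerivAt]
  convert! h using 1
  ext w
  simp only [relativisticEnergy, map_smul, smul_apply, InnerProductSpace.toDual_apply_apply,
    smul_eq_mul, one_div, mul_inv_rev, coe_innerSL_apply, nsmul_eq_mul, Nat.cast_ofNat]
  ring

theorem hasGradientAt_const_mul_relativisticEnergy [CompleteSpace E] (σ : ℝ) (p : E) :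
    HasGradientAt (fun p => σ * relativisticEnergy p) (σ • (relativisticEnergy p)⁻¹ • p) p := by
  rw [hasGradientAt_iff_hasFDerivAt, map_smul]
  exact (hasGradientAt_relativisticEnergy p).hasFDerivAt.const_mul σ

theorem lipschitzWith_gradient_const_mul_relativisticEnergy [CompleteSpace E] (σ : ℝ) :
    LipschitzWith (‖σ‖₊ * 2) (∇ fun p : E => σ * relativisticEnergy p) := by
  rw [gradient_eq (hasGradientAt_const_mul_relativisticEnergy σ)]
  exact (lipschitzWith_smul σ).comp lipschitzWith_inv_relativisticEnergy_smul

end RelativisticEnergy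

section Eikonal

variable {ι : Type*} [Fintype ι] [DecidableEq ι]

theorem sum_spaceTimeForm_single_sq (a : ℝ) (p : EuclideanSpace ℝ ι) :
    ∑ k, spaceTimeForm a p (0, EuclideanSpace.single k 1) ^ 2 = ‖p‖ ^ 2 := by
  simp [EuclideanSpace.norm_sq_eq, EuclideanSpace.inner_single_right]

theorem isHamiltonJacobiSolutionOn_const_mul_relativisticEnergy_iff {σ : ℝ} (hσ : σ ≠ 0)
    {φ : ℝ × EuclideanSpace ℝ ι → ℝ} {s : Set (ℝ × EuclideanSpace ℝ ι)} :
    IsHamiltonJacobiSolutionOn (fun p => σ * relativisticEnergy p) φ s ↔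
      ∀ z ∈ s, fderiv ℝ φ z (1, 0)
        = σ * √(1 + ∑ k, fderiv ℝ φ z (0, EuclideanSpace.single k 1) ^ 2) := by
  refine forall₂_congr fun z _ => ⟨fun ⟨p, hp⟩ => ?_, fun heq => ?_⟩
  · rw [hp.fderiv, sum_spaceTimeForm_single_sq]
    simp [relativisticEnergy]
  · -- The equation forces differentiability: the junk value `fderiv ℝ φ z = 0` violates it.
    have hd : DifferentiableAt ℝ φ z := by
      by_contra hnd
      simp [fderiv_zero_of_not_differentiableAt hnd, hσ.symm] at heq
    obtain ⟨p, hp⟩ := exists_spaceTimeForm_eq (fderiv ℝ φ z)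
    have htime : fderiv ℝ φ z (1, 0) = σ * relativisticEnergy p := by
      rw [heq, ← hp, sum_spaceTimeForm_single_sq, relativisticEnergy]
    refine ⟨p, ?_⟩
    beta_reduce
    rw [← htime, hp]
    exact hd.hasFDerivAt

theorem hamilton_jacobi_local_existence_uniqueness_general {σ : ℝ} (hσ : |σ| = 1)
    {f : EuclideanSpace ℝ ι → ℝ} (hf : ContDiff ℝ (⊤ : ℕ∞) f) {C : ℝ}
    (hC : ∀ x, ‖fderiv ℝ (fderiv ℝ f) x‖ ≤ C) :
    ∃ T : ℝ, 0 < T ∧ ∃ φ : ℝ × EuclideanSpace ℝ ι → ℝ,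
      ContDiffOn ℝ (⊤ : ℕ∞) φ (Ico 0 T ×ˢ univ) ∧
      (∀ z ∈ Ico 0 T ×ˢ univ, fderiv ℝ φ z (1, 0)
        = σ * √(1 + ∑ k, fderiv ℝ φ z (0, EuclideanSpace.single k 1) ^ 2)) ∧
      (∀ x, φ (0, x) = f x) ∧
      (∀ z ∈ Ico 0 T ×ˢ univ, fderiv ℝ φ z (1, 0) ^ 2
        - ∑ k, fderiv ℝ φ z (0, EuclideanSpace.single k 1) ^ 2 = 1) ∧
      ∀ ψ : ℝ × EuclideanSpace ℝ ι → ℝ,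
        (∀ z ∈ Ico 0 T ×ˢ univ, fderiv ℝ ψ z (1, 0)
          = σ * √(1 + ∑ k, fderiv ℝ ψ z (0, EuclideanSpace.single k 1) ^ 2)) →
        (∀ x, ψ (0, x) = f x) → EqOn ψ φ (Ico 0 T ×ˢ univ) := by
  have hσ0 : σ ≠ 0 := abs_ne_zero.1 (hσ ▸ one_ne_zero)
  have hv : LipschitzWith (‖σ‖₊ * 2 * C.toNNReal)
      (characteristicVelocity (fun p => σ * relativisticEnergy p) f) :=
    (lipschitzWith_gradient_const_mul_relativisticEnergy σ).comp
      (lipschitzWith_gradient_of_norm_fderiv_fderiv_le (hf.of_le (by norm_cast)) hC)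
  obtain ⟨T, hT, φ, hφ, hsol, hφ0, hunique⟩ := hamiltonJacobi_exists_contDiffOn_eqOn
    (m := (⊤ : ℕ∞)) (by simp) (by simp) (contDiff_const.mul contDiff_relativisticEnergy) hf
    (lipschitzWith_const_mul_relativisticEnergy σ) hv
  simp only [isHamiltonJacobiSolutionOn_const_mul_relativisticEnergy_iff hσ0] at hsol hunique
  refine ⟨T, hT, φ, hφ, hsol, hφ0, fun z hz => ?_, hunique⟩
  rw [hsol z hz, mul_pow, ← sq_abs σ, hσ, Real.sq_sqrt (by positivity)]
  ring

end Eikonal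

/-- Local existence and uniqueness of smooth solutions of the relativistic
    Hamilton–Jacobi (eikonal) equation ∂ₜφ = ±√(1+|∇φ|²) with smooth initial
    datum having uniformly bounded Hessian; in particular the solution
    satisfies the Klein–Gordon eikonal relation (∂ₜφ)² − |∇φ|² = 1 on the
    slab [0,T) × ℝ³. -/
theorem hamilton_jacobi_local_existence_uniqueness
    (φI : EuclideanSpace ℝ (Fin 3) → ℝ) (hφI : ContDiff ℝ (⊤ : ℕ∞) φI)
    (C : ℝ)
    (hHess : ∀ x : EuclideanSpace ℝ (Fin 3),
      ‖fderiv ℝ (fun y => fderiv ℝ φI y) x‖ ≤ C) :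
    (∃ T : ℝ, 0 < T ∧ ∃ φ : ℝ × EuclideanSpace ℝ (Fin 3) → ℝ,
      ContDiffOn ℝ (⊤ : ℕ∞) φ (Ico (0 : ℝ) T ×ˢ univ) ∧
      (∀ p ∈ Ico (0 : ℝ) T ×ˢ (univ : Set (EuclideanSpace ℝ (Fin 3))),
        fderiv ℝ φ p (1, 0)
          = Real.sqrt (1 + ∑ k, fderiv ℝ φ p (0, EuclideanSpace.single k 1) ^ 2)) ∧
      (∀ x, φ (0, x) = φI x) ∧
      (∀ p ∈ Ico (0 : ℝ) T ×ˢ (univ : Set (EuclideanSpace ℝ (Fin 3))),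
        fderiv ℝ φ p (1, 0) ^ 2
          - ∑ k, fderiv ℝ φ p (0, EuclideanSpace.single k 1) ^ 2 = 1) ∧
      (∀ ψ : ℝ × EuclideanSpace ℝ (Fin 3) → ℝ,
        ContDiffOn ℝ (⊤ : ℕ∞) ψ (Ico (0 : ℝ) T ×ˢ univ) →
        (∀ p ∈ Ico (0 : ℝ) T ×ˢ (univ : Set (EuclideanSpace ℝ (Fin 3))),
          fderiv ℝ ψ p (1, 0)
            = Real.sqrt (1 + ∑ k, fderiv ℝ ψ p (0, EuclideanSpace.single k 1) ^ 2)) →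
        (∀ x, ψ (0, x) = φI x) →
        EqOn ψ φ (Ico (0 : ℝ) T ×ˢ univ))) ∧
    (∃ T : ℝ, 0 < T ∧ ∃ φ : ℝ × EuclideanSpace ℝ (Fin 3) → ℝ,
      ContDiffOn ℝ (⊤ : ℕ∞) φ (Ico (0 : ℝ) T ×ˢ univ) ∧
      (∀ p ∈ Ico (0 : ℝ) T ×ˢ (univ : Set (EuclideanSpace ℝ (Fin 3))),
        fderiv ℝ φ p (1, 0)
          = -Real.sqrt (1 + ∑ k, fderiv ℝ φ p (0, EuclideanSpace.single k 1) ^ 2)) ∧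
      (∀ x, φ (0, x) = φI x) ∧
      (∀ p ∈ Ico (0 : ℝ) T ×ˢ (univ : Set (EuclideanSpace ℝ (Fin 3))),
        fderiv ℝ φ p (1, 0) ^ 2
          - ∑ k, fderiv ℝ φ p (0, EuclideanSpace.single k 1) ^ 2 = 1) ∧
      (∀ ψ : ℝ × EuclideanSpace ℝ (Fin 3) → ℝ,
        ContDiffOn ℝ (⊤ : ℕ∞) ψ (Ico (0 : ℝ) T ×ˢ univ) →
        (∀ p ∈ Ico (0 : ℝ) T ×ˢ (univ : Set (EuclideanSpace ℝ (Fin 3))),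
          fderiv ℝ ψ p (1, 0)
            = -Real.sqrt (1 + ∑ k, fderiv ℝ ψ p (0, EuclideanSpace.single k 1) ^ 2)) →
        (∀ x, ψ (0, x) = φI x) →
        EqOn ψ φ (Ico (0 : ℝ) T ×ˢ univ))) := by
  have hplus := hamilton_jacobi_local_existence_uniqueness_general (σ := 1) (by simp) hφI hHess
  have hminus := hamilton_jacobi_local_existence_uniqueness_general (σ := -1) (by simp) hφI hHess
  simp only [one_mul, neg_one_mul] at hplus hminus
  obtain ⟨T, hT, φ, hφ, heq, h0, hrel, hunique⟩ := hplus
  obtain ⟨T', hT', φ', hφ', heq', h0', hrel', hunique'⟩ := hminus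
  exact ⟨⟨T, hT, φ, hφ, heq, h0, hrel, fun ψ _ => hunique ψ⟩,
    ⟨T', hT', φ', hφ', heq', h0', hrel', fun ψ _ => hunique' ψ⟩⟩

end
end

section
/- Let f : ℝ × ℝ³ → ℝ be smooth and compactly supported, and for t > 0, x ∈ ℝ³ define the retarded potential V(t,x) = (1/(4π)) ∫_{{y : |x−y| ≤ t}} f(t − |x−y|, y)/|x−y| dy. Then V is twice continuously differentiable on (0,∞) × ℝ³ and solves the inhomogeneous wave equation ∂ₜ²V − ΔV = f there, with vanishing Cauchy data: V(t,x) → 0 and ∂ₜV(t,x) → 0 as t → 0⁺, locally uniformly in x. -/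
noncomputable section

open Set MeasureTheory

/-!
In polar coordinates around `x`, the retarded potential becomes the Duhamel integral
`(4π)⁻¹ ∫ τ in 0..t, u τ (t, x)`, where `u τ (t, x) = (t - τ) ∫ f (τ, x + (t - τ) ω) dω` is
Kirchhoff's formula: up to the factor `4π`, the free wave with position `0` and velocity `f (τ, ·)`
at time `τ`. Differentiating the integral twice leaves `4π f` as the boundary term of the wave
operator, and no boundary term in the first derivatives.

That Kirchhoff's formula solves the homogeneous equation is Darboux's equation for spherical
integrals. It comes from the invariance of the measure of the sphere under the rotations
`exp (θ J)`, `J` skew, whose infinitesimal form is an integration by parts on the sphere.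
-/

open Filter Function Module Topology

universe u₁ u₂

section DirectionalDerivative

variable {P G : Type*} [NormedAddCommGroup P] [NormedSpace ℝ P]
  [NormedAddCommGroup G] [NormedSpace ℝ G] {u v : P → G}

/-- The derivative of `u` in the direction `w`, as a function of the base point, so that
`dirDeriv w (dirDeriv w u)` is the second derivative in the direction `w`. -/
def dirDeriv (w : P) (u : P → G) (p : P) : G := fderiv ℝ u p w

theorem contDiff_dirDeriv {m n : WithTop ℕ∞} (hu : ContDiff ℝ m u) (hnm : n + 1 ≤ m) (w : P) :
    ContDiff ℝ n (dirDeriv w u) :=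
  (hu.fderiv_right hnm).clm_apply contDiff_const

theorem eqOn_dirDeriv {s : Set P} (hs : IsOpen s) (h : EqOn u v s) (w : P) :
    EqOn (dirDeriv w u) (dirDeriv w v) s := fun p hp => by
  rw [dirDeriv, dirDeriv, (h.eventuallyEq_of_mem (hs.mem_nhds hp)).fderiv_eq]

theorem dirDeriv_const_smul (c : ℝ) (w : P) : dirDeriv w (c • u) = c • dirDeriv w u := by
  ext p
  simp [dirDeriv, fderiv_const_smul_field]

theorem dirDeriv_add (hu : Differentiable ℝ u) (hv : Differentiable ℝ v) (w : P) :
    dirDeriv w (u + v) = dirDeriv w u + dirDeriv w v := by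
  ext p
  simp [dirDeriv, fderiv_add (hu p) (hv p)]

theorem dirDeriv_comp_sub (u : P → G) (a w : P) :
    dirDeriv w (fun p => u (p - a)) = fun p => dirDeriv w u (p - a) := by
  ext p
  simp [dirDeriv, fderiv_comp_sub]

theorem dirDeriv_comp_clm {P' : Type*} [NormedAddCommGroup P'] [NormedSpace ℝ P']
    (hu : Differentiable ℝ u) (L : P' →L[ℝ] P) (w : P') :
    dirDeriv w (fun p => u (L p)) = fun p => dirDeriv (L w) u (L p) := by
  ext p
  have hcomp := (hu (L p)).hasFDerivAt.comp p L.hasFDerivAt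
  exact congrArg (· w) hcomp.fderiv

theorem dirDeriv_dirDeriv_eq_dirDeriv_fderiv (hu : ContDiff ℝ 2 u) (v w p : P) :
    dirDeriv v (dirDeriv w u) p = dirDeriv v (fderiv ℝ u) p w := by
  have hu' : Differentiable ℝ (fderiv ℝ u) :=
    (hu.fderiv_right one_add_one_eq_two.le).differentiable one_ne_zero
  have hderiv := (hu' p).hasFDerivAt.clm_apply (hasFDerivAt_const w p)
  change fderiv ℝ (fun q => fderiv ℝ u q w) p v = _
  simp [hderiv.fderiv, dirDeriv]

theorem dirDeriv_comp_const_add_smul (u : P → G) (x : P) (s : ℝ) (w p : P) :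
    dirDeriv w (fun q => u (x + s • q)) p = s • dirDeriv w u (x + s • p) := by
  rw [dirDeriv, fderiv_comp_smul (f := fun q => u (x + q)), fderiv_comp_add_left]
  rfl

variable {E : Type*} [NormedAddCommGroup E] [NormedSpace ℝ E] {u : ℝ × E → G}

theorem dirDeriv_fst_smul (hu : Differentiable ℝ u) (w : ℝ × E) :
    dirDeriv w (fun p => p.1 • u p) = w.1 • u + fun p => p.1 • dirDeriv w u p := by
  ext p
  simp [dirDeriv, fderiv_fun_smul differentiableAt_fst (hu p), fderiv_fst, add_comm]

theorem dirDeriv_dirDeriv_fst_smul (hu : ContDiff ℝ 2 u) (w p : ℝ × E) :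
    dirDeriv w (dirDeriv w fun p => p.1 • u p) p
      = (2 * w.1) • dirDeriv w u p + p.1 • dirDeriv w (dirDeriv w u) p := by
  have hu0 : Differentiable ℝ u := hu.differentiable two_ne_zero
  have hu1 : Differentiable ℝ (dirDeriv w u) :=
    (contDiff_dirDeriv hu one_add_one_eq_two.le w).differentiable one_ne_zero
  rw [dirDeriv_fst_smul hu0, dirDeriv_add (hu0.const_smul w.1) (by fun_prop), dirDeriv_const_smul,
    dirDeriv_fst_smul hu1]
  simp only [Pi.add_apply, Pi.smul_apply]
  module

end DirectionalDerivative

section DAlembertian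

variable {ι G : Type*} [Fintype ι] [DecidableEq ι] [NormedAddCommGroup G] [NormedSpace ℝ G]
  {u v : ℝ × EuclideanSpace ℝ ι → G}

/-- The wave operator `∂ₜ² - Δ` on functions of time and space. -/
def dAlembertian (u : ℝ × EuclideanSpace ℝ ι → G) (p : ℝ × EuclideanSpace ℝ ι) : G :=
  dirDeriv (1, 0) (dirDeriv (1, 0) u) p
    - ∑ k, dirDeriv (0, EuclideanSpace.single k 1) (dirDeriv (0, EuclideanSpace.single k 1) u) p

theorem dAlembertian_const_smul (c : ℝ) (u : ℝ × EuclideanSpace ℝ ι → G) :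
    dAlembertian (c • u) = c • dAlembertian u := by
  ext p
  simp only [dAlembertian, dirDeriv_const_smul, Pi.smul_apply, smul_sub, Finset.smul_sum]

theorem dAlembertian_comp_sub (u : ℝ × EuclideanSpace ℝ ι → G) (a p : ℝ × EuclideanSpace ℝ ι) :
    dAlembertian (fun q => u (q - a)) p = dAlembertian u (p - a) := by
  simp only [dAlembertian, dirDeriv_comp_sub]

theorem eqOn_dAlembertian {s : Set (ℝ × EuclideanSpace ℝ ι)} (hs : IsOpen s) (h : EqOn u v s) :
    EqOn (dAlembertian u) (dAlembertian v) s := fun p hp => by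
  have hw (w) := eqOn_dirDeriv hs (eqOn_dirDeriv hs h w) w hp
  simp only [dAlembertian, hw]

theorem dAlembertian_fst_smul (hu : ContDiff ℝ 2 u) (p : ℝ × EuclideanSpace ℝ ι) :
    dAlembertian (fun q => q.1 • u q) p
      = (2 : ℝ) • dirDeriv (1, 0) u p + p.1 • dAlembertian u p := by
  simp only [dAlembertian, dirDeriv_dirDeriv_fst_smul hu, mul_one, mul_zero, zero_smul, zero_add,
    smul_sub, Finset.smul_sum, add_sub_assoc]

end DAlembertian

section ParametricIntegral

theorem exists_eventually_norm_le_of_continuous {P X G : Type*} [TopologicalSpace P]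
    [TopologicalSpace X] [SeminormedAddCommGroup G] {F : P → X → G}
    (hF : Continuous (uncurry F)) {K : Set X} (hK : IsCompact K) (p : P) :
    ∃ C, ∀ᶠ q in 𝓝 p, ∀ a ∈ K, ‖F q a‖ ≤ C := by
  obtain ⟨C, hC⟩ := hK.exists_bound_of_continuousOn (f := F p) (by fun_prop)
  refine ⟨C + 1, hK.eventually_forall_of_forall_eventually fun a ha => ?_⟩
  have hlt : ‖F p a‖ < C + 1 := (hC a ha).trans_lt (lt_add_one C)
  exact (hF.norm.continuousAt.eventually_lt continuousAt_const hlt).mono fun _ h => h.le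

section Continuity

variable {X G : Type*} [TopologicalSpace X] [MeasurableSpace X] [OpensMeasurableSpace X]
  [NormedAddCommGroup G] [SecondCountableTopologyEither X G]
  {μ : Measure X} [IsFiniteMeasure μ] {K : Set X}

theorem integrable_of_continuous_of_ae_mem_isCompact {g : X → G} (hg : Continuous g)
    (hK : IsCompact K) (hμ : ∀ᵐ a ∂μ, a ∈ K) : Integrable g μ := by
  obtain ⟨C, hC⟩ := hK.exists_bound_of_continuousOn hg.continuousOn
  exact .of_bound hg.aestronglyMeasurable C (hμ.mono hC)

theorem continuous_integral_of_ae_mem_isCompact {P : Type*} [TopologicalSpace P]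
    [FirstCountableTopology P] [NormedSpace ℝ G] {F : P → X → G} (hF : Continuous (uncurry F))
    (hK : IsCompact K) (hμ : ∀ᵐ a ∂μ, a ∈ K) : Continuous fun p => ∫ a, F p a ∂μ := by
  refine continuous_iff_continuousAt.2 fun p => ?_
  obtain ⟨C, hC⟩ := exists_eventually_norm_le_of_continuous hF hK p
  refine continuousAt_of_dominated (bound := fun _ => C)
    (.of_forall fun q => Continuous.aestronglyMeasurable (by fun_prop))
    (hC.mono fun q hq => hμ.mono hq) (integrable_const C) (.of_forall fun a => ?_)
  fun_prop

end Continuity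

theorem contDiff_uncurry_fderiv {H X G : Type*} [NormedAddCommGroup H] [NormedSpace ℝ H]
    [NormedAddCommGroup X] [NormedSpace ℝ X] [NormedAddCommGroup G] [NormedSpace ℝ G]
    {F : H → X → G} {m n : WithTop ℕ∞} (hF : ContDiff ℝ m (uncurry F)) (hnm : n + 1 ≤ m) :
    ContDiff ℝ n (uncurry fun p a => fderiv ℝ (fun q => F q a) p) :=
  ContDiff.fderiv (f := fun (r : H × X) q => F q r.2) (by fun_prop) contDiff_fst hnm

-- `G` absorbs the universe of `H` because induction on smoothness passes from `G` to `H →L[ℝ] G`.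
variable {H : Type u₁} {G : Type max u₁ u₂} {X : Type*} [NormedAddCommGroup H] [NormedSpace ℝ H]
  [NormedAddCommGroup X] [NormedSpace ℝ X] [SecondCountableTopology X]
  [MeasurableSpace X] [OpensMeasurableSpace X] {μ : Measure X} [IsFiniteMeasure μ] {K : Set X}
  [NormedAddCommGroup G] [NormedSpace ℝ G] {F : H → X → G}

theorem hasFDerivAt_integral_of_contDiff (hF : ContDiff ℝ 1 (uncurry F)) (hK : IsCompact K)
    (hμ : ∀ᵐ a ∂μ, a ∈ K) (p : H) :
    HasFDerivAt (fun p => ∫ a, F p a ∂μ) (∫ a, fderiv ℝ (fun q => F q a) p ∂μ) p := by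
  have hF' : Continuous (uncurry fun p a => fderiv ℝ (fun q => F q a) p) :=
    (contDiff_uncurry_fderiv hF (zero_add 1).le).continuous
  obtain ⟨C, hC⟩ := exists_eventually_norm_le_of_continuous hF' hK p
  refine hasFDerivAt_integral_of_dominated_of_fderiv_le (bound := fun _ => C)
    (F' := fun p a => fderiv ℝ (fun q => F q a) p) hC
    (.of_forall fun q => Continuous.aestronglyMeasurable (by fun_prop))
    (integrable_of_continuous_of_ae_mem_isCompact (by fun_prop) hK hμ)
    (Continuous.aestronglyMeasurable (by fun_prop))
    (hμ.mono fun a ha q hq => hq a ha) (integrable_const C) (.of_forall fun a q _ => ?_)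
  have hFa : ContDiff ℝ 1 fun q => F q a := by fun_prop
  exact (hFa.differentiable one_ne_zero q).hasFDerivAt

theorem dirDeriv_integral_of_contDiff (hF : ContDiff ℝ 1 (uncurry F))
    (hK : IsCompact K) (hμ : ∀ᵐ a ∂μ, a ∈ K) (w : H) :
    dirDeriv w (fun p => ∫ a, F p a ∂μ) = fun p => ∫ a, dirDeriv w (fun q => F q a) p ∂μ := by
  ext p
  have hF' : Continuous fun a => fderiv ℝ (fun q => F q a) p :=
    (contDiff_uncurry_fderiv hF (zero_add 1).le).continuous.uncurry_left p
  have hint : Integrable (fun a => fderiv ℝ (fun q => F q a) p) μ :=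
    integrable_of_continuous_of_ae_mem_isCompact hF' hK hμ
  rw [dirDeriv, (hasFDerivAt_integral_of_contDiff hF hK hμ p).fderiv,
    ContinuousLinearMap.integral_apply hint]
  rfl

theorem contDiff_integral_of_contDiff {n : ℕ} (hF : ContDiff ℝ n (uncurry F)) (hK : IsCompact K)
    (hμ : ∀ᵐ a ∂μ, a ∈ K) : ContDiff ℝ n fun p => ∫ a, F p a ∂μ := by
  induction n generalizing G with
  | zero =>
    exact contDiff_zero.2 (continuous_integral_of_ae_mem_isCompact (contDiff_zero.1 hF) hK hμ)
  | succ n ih =>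
    have hderiv := hasFDerivAt_integral_of_contDiff (hF.of_le (by norm_cast; omega)) hK hμ
    push_cast at hF ⊢
    refine contDiff_succ_iff_fderiv.2 ⟨fun p => (hderiv p).differentiableAt, by simp, ?_⟩
    rw [funext fun p => (hderiv p).fderiv]
    exact ih (contDiff_uncurry_fderiv hF le_rfl)

end ParametricIntegral

section ParametricPrimitive

variable {P : Type u₁} {G : Type max u₁ u₂} [NormedAddCommGroup P] [NormedSpace ℝ P]
  [NormedAddCommGroup G] [NormedSpace ℝ G] {Q : ℝ → P → G}

theorem contDiff_intervalIntegral_zero_fst {n : ℕ} (hQ : ContDiff ℝ n (uncurry Q)) :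
    ContDiff ℝ n fun q : ℝ × P => ∫ τ in 0..q.1, Q τ q.2 := by
  have hrescale (q : ℝ × P) :
      ∫ τ in 0..q.1, Q τ q.2 = ∫ r in Icc (0 : ℝ) 1, q.1 • Q (q.1 * r) q.2 := by
    rw [integral_Icc_eq_integral_Ioc, ← intervalIntegral.integral_of_le zero_le_one,
      intervalIntegral.integral_smul,
      intervalIntegral.smul_integral_comp_mul_left (fun τ => Q τ q.2), mul_zero, mul_one]
  simp_rw [hrescale]
  exact contDiff_integral_of_contDiff (F := fun (q : ℝ × P) r => q.1 • Q (q.1 * r) q.2)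
    (by fun_prop) isCompact_Icc (ae_restrict_mem measurableSet_Icc)

theorem dirDeriv_intervalIntegral (hQ : ContDiff ℝ 1 (uncurry Q)) (a b : ℝ)
    (w : P) :
    dirDeriv w (fun p => ∫ τ in a..b, Q τ p) = fun p => ∫ τ in a..b, dirDeriv w (Q τ) p := by
  simp_rw [intervalIntegral.intervalIntegral_eq_integral_uIoc]
  exact (dirDeriv_const_smul (if a ≤ b then 1 else -1) w).trans <| congrArg _ <|
    dirDeriv_integral_of_contDiff (F := fun p τ => Q τ p)
      (μ := volume.restrict (Ioc (min a b) (max a b))) (by fun_prop) isCompact_uIcc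
      ((ae_restrict_mem measurableSet_uIoc).mono fun _ h => uIoc_subset_uIcc h) w

theorem dirDeriv_intervalIntegral_zero_fst [CompleteSpace G] (hQ : ContDiff ℝ 1 (uncurry Q))
    (w : ℝ × P) (q : ℝ × P) :
    dirDeriv w (fun q : ℝ × P => ∫ τ in 0..q.1, Q τ q.2) q
      = w.1 • Q q.1 q.2 + ∫ τ in 0..q.1, dirDeriv w.2 (Q τ) q.2 := by
  set Φ : ℝ × P → G := fun q => ∫ τ in 0..q.1, Q τ q.2
  have hΦ : HasFDerivAt Φ (fderiv ℝ Φ q) q :=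
    ((contDiff_intervalIntegral_zero_fst (n := 1) hQ).differentiable one_ne_zero q).hasFDerivAt
  have htime : fderiv ℝ Φ q (1, 0) = Q q.1 q.2 := by
    have hline : HasDerivAt (fun a => (a, q.2)) ((1 : ℝ), (0 : P)) q.1 :=
      (hasDerivAt_id q.1).prodMk (hasDerivAt_const q.1 q.2)
    have hcomp : HasDerivAt (fun a => ∫ τ in 0..a, Q τ q.2) (fderiv ℝ Φ q (1, 0)) q.1 :=
      HasFDerivAt.comp_hasDerivAt (l := Φ) q.1 hΦ hline
    have hQc : Continuous fun τ => Q τ q.2 := by fun_prop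
    exact hcomp.unique (hQc.integral_hasStrictDerivAt 0 q.1).hasDerivAt
  have hspace : fderiv ℝ Φ q (0, w.2) = ∫ τ in 0..q.1, dirDeriv w.2 (Q τ) q.2 := by
    have hcomp : HasFDerivAt (fun p => ∫ τ in 0..q.1, Q τ p)
        ((fderiv ℝ Φ q).comp (.inr ℝ ℝ P)) q.2 :=
      HasFDerivAt.comp (g := Φ) (f := fun p => (q.1, p)) q.2 hΦ (hasFDerivAt_prodMk_right q.1 q.2)
    rw [← congrFun (dirDeriv_intervalIntegral hQ 0 q.1 w.2) q.2, dirDeriv, hcomp.fderiv]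
    rfl
  calc fderiv ℝ Φ q w = fderiv ℝ Φ q (w.1 • (1, 0) + (0, w.2)) := by simp
    _ = _ := by rw [map_add, map_smul, htime, hspace]

end ParametricPrimitive

section Duhamel

variable {E : Type u₁} {G : Type max u₁ u₂} [NormedAddCommGroup E] [NormedSpace ℝ E]
  [NormedAddCommGroup G] [NormedSpace ℝ G] {Q : ℝ → ℝ × E → G}

/-- The Duhamel superposition `(t, x) ↦ ∫ τ in 0..t, Q τ (t, x)` of the functions `Q τ` on
space-time, where `Q τ` is thought of as the wave emitted at time `τ`. -/
def duhamel (Q : ℝ → ℝ × E → G) (p : ℝ × E) : G := ∫ τ in 0..p.1, Q τ p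

omit [NormedAddCommGroup E] [NormedSpace ℝ E] in
theorem duhamel_time_zero (Q : ℝ → ℝ × E → G) (x : E) : duhamel Q (0, x) = 0 :=
  intervalIntegral.integral_same

theorem contDiff_duhamel {n : ℕ} (hQ : ContDiff ℝ n (uncurry Q)) : ContDiff ℝ n (duhamel Q) :=
  (contDiff_intervalIntegral_zero_fst hQ).comp (contDiff_fst.prodMk contDiff_id)

theorem contDiff_uncurry_dirDeriv {m n : WithTop ℕ∞} (hQ : ContDiff ℝ m (uncurry Q))
    (hnm : n + 1 ≤ m) (w : ℝ × E) : ContDiff ℝ n (uncurry fun τ => dirDeriv w (Q τ)) :=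
  (ContDiff.fderiv (f := fun q : ℝ × (ℝ × E) => Q q.1) (by fun_prop) contDiff_snd hnm).clm_apply
    contDiff_const

variable [CompleteSpace G]

theorem dirDeriv_duhamel (hQ : ContDiff ℝ 1 (uncurry Q)) (w p : ℝ × E) :
    dirDeriv w (duhamel Q) p = w.1 • Q p.1 p + duhamel (fun τ => dirDeriv w (Q τ)) p := by
  set Φ : ℝ × (ℝ × E) → G := fun q => ∫ τ in 0..q.1, Q τ q.2
  have hΦ : Differentiable ℝ Φ :=
    (contDiff_intervalIntegral_zero_fst (n := 1) hQ).differentiable one_ne_zero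
  have hcomp : HasFDerivAt (duhamel Q)
      ((fderiv ℝ Φ (p.1, p)).comp ((ContinuousLinearMap.fst ℝ ℝ E).prod (.id ℝ (ℝ × E)))) p :=
    HasFDerivAt.comp (g := Φ) (f := fun q : ℝ × E => (q.1, q)) p (hΦ (p.1, p)).hasFDerivAt
      (hasFDerivAt_fst.prodMk (hasFDerivAt_id p))
  rw [duhamel, ← dirDeriv_intervalIntegral_zero_fst hQ (w.1, w) (p.1, p), dirDeriv, hcomp.fderiv]
  rfl

theorem dirDeriv_duhamel_of_vanishing (hQ : ContDiff ℝ 1 (uncurry Q)) (hQ0 : ∀ p, Q p.1 p = 0)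
    (w : ℝ × E) : dirDeriv w (duhamel Q) = duhamel fun τ => dirDeriv w (Q τ) := by
  ext p
  rw [dirDeriv_duhamel hQ, hQ0, smul_zero, zero_add]

theorem dirDeriv_dirDeriv_duhamel (hQ : ContDiff ℝ 2 (uncurry Q)) (hQ0 : ∀ p, Q p.1 p = 0)
    (w p : ℝ × E) :
    dirDeriv w (dirDeriv w (duhamel Q)) p
      = w.1 • dirDeriv w (Q p.1) p + duhamel (fun τ => dirDeriv w (dirDeriv w (Q τ))) p := by
  rw [dirDeriv_duhamel_of_vanishing (hQ.of_le one_le_two) hQ0,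
    dirDeriv_duhamel (contDiff_uncurry_dirDeriv hQ one_add_one_eq_two.le w)]

end Duhamel

section DuhamelPrinciple

variable {ι : Type u₁} {G : Type max u₁ u₂} [Fintype ι] [DecidableEq ι] [NormedAddCommGroup G]
  [NormedSpace ℝ G] [CompleteSpace G] {Q : ℝ → ℝ × EuclideanSpace ℝ ι → G}

theorem dAlembertian_duhamel (hQ : ContDiff ℝ 2 (uncurry Q)) (hQ0 : ∀ p, Q p.1 p = 0)
    (hQwave : ∀ τ, dAlembertian (Q τ) = 0) (p : ℝ × EuclideanSpace ℝ ι) :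
    dAlembertian (duhamel Q) p = dirDeriv (1, 0) (Q p.1) p := by
  have hint (w : ℝ × EuclideanSpace ℝ ι) :
      IntervalIntegrable (fun τ => dirDeriv w (dirDeriv w (Q τ)) p) volume 0 p.1 := by
    have hQ1 := contDiff_uncurry_dirDeriv hQ one_add_one_eq_two.le w
    have hQ2 := (contDiff_uncurry_dirDeriv (n := 0) hQ1 (zero_add 1).le w).continuous
    exact (hQ2.uncurry_right p).intervalIntegrable 0 p.1
  have hsum : IntervalIntegrable (fun τ => ∑ k, dirDeriv (0, EuclideanSpace.single k 1)
      (dirDeriv (0, EuclideanSpace.single k 1) (Q τ)) p) volume 0 p.1 := by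
    simpa only [Finset.sum_fn] using IntervalIntegrable.sum Finset.univ fun k _ => hint _
  calc dAlembertian (duhamel Q) p
      = dirDeriv (1, 0) (Q p.1) p + duhamel (fun τ => dAlembertian (Q τ)) p := by
        simp only [dAlembertian, dirDeriv_dirDeriv_duhamel hQ hQ0, one_smul, zero_smul, zero_add,
          add_sub_assoc, duhamel]
        rw [intervalIntegral.integral_sub (hint _) hsum,
          intervalIntegral.integral_finsetSum fun k _ => hint _]
    _ = dirDeriv (1, 0) (Q p.1) p := by simp [duhamel, hQwave]

end DuhamelPrinciple

section SphereMeasure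

open scoped RealInnerProductSpace

variable (E : Type*) [NormedAddCommGroup E] [InnerProductSpace ℝ E] [FiniteDimensional ℝ E]
  [MeasurableSpace E] [BorelSpace E]

/-- The surface measure of the unit sphere, as a measure on the ambient space. -/
def sphereMeasure : Measure E := (volume : Measure E).toSphere.map (↑)

instance : IsFiniteMeasure (sphereMeasure E) := by
  unfold sphereMeasure
  infer_instance

theorem ae_mem_sphere_sphereMeasure : ∀ᵐ ω ∂sphereMeasure E, ω ∈ Metric.sphere (0 : E) 1 :=
  (ae_map_iff measurable_subtype_coe.aemeasurable Metric.isClosed_sphere.measurableSet).2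
    (.of_forall fun ω => ω.2)

theorem sphereMeasure_real_univ_fin_three :
    (sphereMeasure (EuclideanSpace ℝ (Fin 3))).real univ = 4 * Real.pi := by
  have hvolume : volume.real (Metric.ball (0 : EuclideanSpace ℝ (Fin 3)) 1)
      = Real.pi * 4 / 3 := by
    have hnonneg : 0 ≤ Real.pi * 4 / 3 := by positivity
    simp [Measure.real, EuclideanSpace.volume_ball_fin_three, hnonneg]
  rw [sphereMeasure, map_measureReal_apply measurable_subtype_coe .univ, preimage_univ,
    Measure.toSphere_real_apply_univ, hvolume, finrank_euclideanSpace_fin]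
  ring

variable {E}

theorem integral_sphereMeasure_eq_integral_toSphere {G : Type*} [NormedAddCommGroup G]
    [NormedSpace ℝ G] (h : E → G) :
    ∫ ω, h ω ∂sphereMeasure E
      = ∫ ω : Metric.sphere (0 : E) 1, h ω ∂(volume : Measure E).toSphere :=
  (MeasurableEmbedding.subtype_coe Metric.isClosed_sphere.measurableSet).integral_map h

open scoped Pointwise in
theorem map_sphereMeasure (R : E ≃ₗᵢ[ℝ] E) : (sphereMeasure E).map R = sphereMeasure E := by
  ext s hs
  have hR : Measurable R := R.continuous.measurable
  have hcone : Ioo (0 : ℝ) 1 • ((↑) '' ((↑) ⁻¹' (R ⁻¹' s) : Set (Metric.sphere (0 : E) 1)) : Set E)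
      = R ⁻¹' (Ioo (0 : ℝ) 1 • ((↑) '' ((↑) ⁻¹' s : Set (Metric.sphere (0 : E) 1)))) := by
    have hsphere : Metric.sphere (0 : E) 1 = R ⁻¹' Metric.sphere 0 1 := by ext; simp
    rw [Subtype.image_preimage_coe, Subtype.image_preimage_coe]
    nth_rewrite 1 [hsphere]
    rw [← preimage_inter]
    ext z
    simp only [Set.mem_smul, mem_preimage]
    exact exists_congr fun r => and_congr_right fun _ =>
      ⟨fun ⟨y, hy, h⟩ => ⟨R y, hy, by rw [← h, map_smul]⟩,
        fun ⟨y, hy, h⟩ => ⟨R.symm y, by simpa using hy, R.injective (by simpa using h)⟩⟩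
  rw [sphereMeasure, Measure.map_apply hR hs, Measure.map_apply measurable_subtype_coe (hR hs),
    Measure.map_apply measurable_subtype_coe hs,
    Measure.toSphere_apply' _ (measurable_subtype_coe (hR hs)),
    Measure.toSphere_apply' _ (measurable_subtype_coe hs), hcone]
  exact congrArg _ (R.measurePreserving.measure_preimage_equiv (f := R.toMeasurableEquiv) _)

theorem integral_comp_linearIsometryEquiv_sphereMeasure {G : Type*} [NormedAddCommGroup G]
    [NormedSpace ℝ G] (R : E ≃ₗᵢ[ℝ] E) (h : E → G) :
    ∫ ω, h (R ω) ∂sphereMeasure E = ∫ ω, h ω ∂sphereMeasure E := by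
  conv_rhs => rw [← map_sphereMeasure R]
  exact (R.toMeasurableEquiv.measurableEmbedding.integral_map h).symm

variable {G : Type*} [NormedAddCommGroup G]

theorem integrable_sphereMeasure_of_continuous {h : E → G} (hh : Continuous h) :
    Integrable h (sphereMeasure E) :=
  integrable_of_continuous_of_ae_mem_isCompact hh (isCompact_sphere 0 1)
    (ae_mem_sphere_sphereMeasure E)

end SphereMeasure

section Rotation

open scoped RealInnerProductSpace

variable {E : Type*} [NormedAddCommGroup E] [InnerProductSpace ℝ E]

theorem exists_linearIsometryEquiv_eq_exp_smul [CompleteSpace E] {J : E →L[ℝ] E}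
    (hJ : ∀ x y, ⟪J x, y⟫ = -⟪x, J y⟫) (θ : ℝ) :
    ∃ R : E ≃ₗᵢ[ℝ] E, ∀ x, R x = NormedSpace.exp (θ • J) x := by
  have hskew : J ∈ skewAdjoint (E →L[ℝ] E) := by
    rw [skewAdjoint.mem_iff, ContinuousLinearMap.star_eq_adjoint, eq_comm,
      ContinuousLinearMap.eq_adjoint_iff]
    simp [hJ]
  let _ : NormedAlgebra ℚ (E →L[ℝ] E) := NormedAlgebra.restrictScalars ℚ ℝ _
  exact ⟨Unitary.linearIsometryEquiv
    ⟨_, NormedSpace.exp_mem_unitary_of_mem_skewAdjoint (skewAdjoint.smul_mem θ hskew)⟩,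
    fun _ => rfl⟩

theorem hasDerivAt_exp_smul_apply_zero [CompleteSpace E] (J : E →L[ℝ] E) (x : E) :
    HasDerivAt (fun θ : ℝ => NormedSpace.exp (θ • J) x) (J x) 0 := by
  simpa using (hasDerivAt_exp_smul_const (𝕂 := ℝ) J (0 : ℝ)).clm_apply (hasDerivAt_const 0 x)

variable [FiniteDimensional ℝ E] [MeasurableSpace E] [BorelSpace E]
  {G : Type*} [NormedAddCommGroup G] [NormedSpace ℝ G]

/- The integrals of `h` over the sphere rotated by `exp (θ • J)` do not depend on `θ`. -/
theorem integral_dirDeriv_skew_sphereMeasure {h : E → G} (hh : ContDiff ℝ 1 h)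
    {J : E →L[ℝ] E} (hJ : ∀ x y, ⟪J x, y⟫ = -⟪x, J y⟫) :
    ∫ ω, dirDeriv (J ω) h ω ∂sphereMeasure E = 0 := by
  have := FiniteDimensional.complete ℝ E
  set F : ℝ → E → G := fun θ ω => h (NormedSpace.exp (θ • J) ω)
  have hexp : ContDiff ℝ 1 (NormedSpace.exp : (E →L[ℝ] E) → _) :=
    contDiff_iff_contDiffAt.2 fun x => (NormedSpace.exp_analytic (𝕂 := ℝ) x).contDiffAt
  have hF : ContDiff ℝ 1 (uncurry F) := by
    have := hexp.comp (g := NormedSpace.exp) (f := fun q : ℝ × E => q.1 • J) (by fun_prop)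
    exact hh.comp (this.clm_apply contDiff_snd)
  have hconst : (fun θ => ∫ ω, F θ ω ∂sphereMeasure E) = fun _ => ∫ ω, h ω ∂sphereMeasure E := by
    ext θ
    obtain ⟨R, hR⟩ := exists_linearIsometryEquiv_eq_exp_smul hJ θ
    simp only [F, ← hR, integral_comp_linearIsometryEquiv_sphereMeasure]
  have hderiv (ω : E) : dirDeriv (1 : ℝ) (fun θ => F θ ω) 0 = dirDeriv (J ω) h ω := by
    have hhω : HasFDerivAt h (fderiv ℝ h ω) (NormedSpace.exp ((0 : ℝ) • J) ω) := by
      simpa using (hh.differentiable one_ne_zero ω).hasFDerivAt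
    rw [dirDeriv, fderiv_apply_one_eq_deriv]
    exact (hhω.comp_hasDerivAt (0 : ℝ) (hasDerivAt_exp_smul_apply_zero J ω)).deriv
  calc ∫ ω, dirDeriv (J ω) h ω ∂sphereMeasure E
      = dirDeriv (1 : ℝ) (fun θ => ∫ ω, F θ ω ∂sphereMeasure E) 0 := by
        simp only [dirDeriv_integral_of_contDiff hF (isCompact_sphere 0 1)
          (ae_mem_sphere_sphereMeasure E), hderiv]
    _ = 0 := by simp [hconst, dirDeriv]

end Rotation

section Divergence

open scoped RealInnerProductSpace

variable {E : Type*} [NormedAddCommGroup E] [InnerProductSpace ℝ E]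
  {G : Type*} [NormedAddCommGroup G] [NormedSpace ℝ G]

/-- The infinitesimal rotation `ω ↦ ⟪a, ω⟫ b - ⟪b, ω⟫ a` in the plane spanned by `a` and `b`. -/
def rotationGenerator (a b : E) : E →L[ℝ] E :=
  (innerSL ℝ a).smulRight b - (innerSL ℝ b).smulRight a

theorem rotationGenerator_apply (a b ω : E) :
    rotationGenerator a b ω = ⟪a, ω⟫ • b - ⟪b, ω⟫ • a := rfl

theorem inner_rotationGenerator_left (a b x y : E) :
    ⟪rotationGenerator a b x, y⟫ = -⟪x, rotationGenerator a b y⟫ := by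
  simp only [rotationGenerator_apply, inner_sub_left, inner_sub_right, real_inner_smul_right,
    real_inner_comm]
  ring

theorem dirDeriv_inner_smul_clm_apply {A : E → E →L[ℝ] G} (hA : Differentiable ℝ A)
    (a b v ω : E) :
    dirDeriv v (fun η => ⟪a, η⟫ • A η b) ω
      = ⟪a, v⟫ • A ω b + ⟪a, ω⟫ • dirDeriv v A ω b := by
  have hinner : HasFDerivAt (fun η => ⟪a, η⟫) (innerSL ℝ a) ω := (innerSL ℝ a).hasFDerivAt
  have hAb := (hA ω).hasFDerivAt.clm_apply (hasFDerivAt_const b ω)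
  rw [dirDeriv, (hinner.fun_smul hAb).fderiv]
  simp [dirDeriv, add_comm]

theorem sum_sum_inner_rotationGenerator_smul {ι : Type*} [Fintype ι] (e : OrthonormalBasis ι ℝ E)
    (L : E →L[ℝ] G) (B : E →L[ℝ] E →L[ℝ] G) {ω : E} (hω : ‖ω‖ = 1) :
    ∑ i, ∑ j, (⟪e i, rotationGenerator (e i) (e j) ω⟫ • L (e j)
        + ⟪e i, ω⟫ • B (rotationGenerator (e i) (e j) ω) (e j))
      = ∑ k, B (e k) (e k) - ((Fintype.card ι - 1 : ℝ) • L ω + B ω ω) := by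
  classical
  have hexpand (T : E →L[ℝ] G) : ∑ j, ⟪e j, ω⟫ • T (e j) = T ω := by
    simp only [← map_smul, ← map_sum, e.sum_repr']
  have hB : ∑ i, ∑ j, ⟪e i, ω⟫ • ⟪e j, ω⟫ • B (e i) (e j) = B ω ω := by
    simp only [← Finset.smul_sum, hexpand]
    exact hexpand (B.flip ω)
  have hnorm : ∑ i, ⟪e i, ω⟫ * ⟪e i, ω⟫ = 1 := by
    simpa [hω, sq] using e.sum_sq_norm_inner_right ω
  have htrace : ∑ i, ∑ j, ⟪e i, ω⟫ • ⟪e i, ω⟫ • B (e j) (e j) = ∑ k, B (e k) (e k) := by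
    rw [Finset.sum_comm]
    simp only [smul_smul, ← Finset.sum_smul, hnorm, one_smul]
  have hdiag (i j) : ⟪e i, rotationGenerator (e i) (e j) ω⟫
      = (if i = j then ⟪e i, ω⟫ else 0) - ⟪e j, ω⟫ := by
    simp [rotationGenerator_apply, inner_sub_right, real_inner_smul_right, e.inner_eq_ite]
  simp only [hdiag]
  simp only [rotationGenerator_apply, map_sub, map_smul, sub_apply, smul_apply, sub_smul, smul_sub,
    Finset.sum_add_distrib, Finset.sum_sub_distrib, ite_smul, zero_smul, Finset.sum_ite_eq,
    Finset.mem_univ, if_true, hexpand, hB, htrace, Finset.sum_const, Finset.card_univ]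
  module

variable [FiniteDimensional ℝ E] [MeasurableSpace E] [BorelSpace E]

theorem integral_sum_dirDeriv_apply_sphereMeasure {ι : Type*} [Fintype ι]
    (e : OrthonormalBasis ι ℝ E) {A : E → E →L[ℝ] G} (hA : ContDiff ℝ 1 A) :
    ∫ ω, ∑ k, dirDeriv (e k) A ω (e k) ∂sphereMeasure E
      = ((Fintype.card ι : ℝ) - 1) • ∫ ω, A ω ω ∂sphereMeasure E
        + ∫ ω, dirDeriv ω A ω ω ∂sphereMeasure E := by
  have hA' : Continuous (uncurry fun v ω => dirDeriv v A ω) :=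
    ((hA.continuous_fderiv one_ne_zero).comp continuous_snd).clm_apply continuous_fst
  have hskew (i j) : ∫ ω, (⟪e i, rotationGenerator (e i) (e j) ω⟫ • A ω (e j)
      + ⟪e i, ω⟫ • dirDeriv (rotationGenerator (e i) (e j) ω) A ω (e j)) ∂sphereMeasure E = 0 := by
    simpa only [dirDeriv_inner_smul_clm_apply (hA.differentiable one_ne_zero)] using
      integral_dirDeriv_skew_sphereMeasure (h := fun η => ⟪e i, η⟫ • A η (e j))
        ((contDiff_const.inner ℝ contDiff_id).smul (hA.clm_apply contDiff_const))
        (inner_rotationGenerator_left (e i) (e j))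
  have hint {g : E → G} (hg : Continuous g) : Integrable g (sphereMeasure E) :=
    integrable_sphereMeasure_of_continuous hg
  rw [← integral_smul, ← integral_add (hint (by fun_prop)) (hint (by fun_prop)), ← sub_eq_zero,
    ← integral_sub (hint (by fun_prop)) (hint (by fun_prop))]
  calc ∫ ω, (∑ k, dirDeriv (e k) A ω (e k)
        - (((Fintype.card ι : ℝ) - 1) • A ω ω + dirDeriv ω A ω ω)) ∂sphereMeasure E
      = ∫ ω, ∑ i, ∑ j, (⟪e i, rotationGenerator (e i) (e j) ω⟫ • A ω (e j)
          + ⟪e i, ω⟫ • dirDeriv (rotationGenerator (e i) (e j) ω) A ω (e j)) ∂sphereMeasure E :=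
        integral_congr_ae <| (ae_mem_sphere_sphereMeasure E).mono fun ω hω =>
          (sum_sum_inner_rotationGenerator_smul e (A ω) (fderiv ℝ A ω) (by simpa using hω)).symm
    _ = 0 := by
        rw [integral_finsetSum _ fun i _ => hint (by fun_prop)]
        refine Finset.sum_eq_zero fun i _ => ?_
        rw [integral_finsetSum _ fun j _ => hint (by fun_prop)]
        exact Finset.sum_eq_zero fun j _ => hskew i j

theorem smul_integral_sum_dirDeriv_dirDeriv_sphereMeasure {ι : Type*} [Fintype ι]
    (e : OrthonormalBasis ι ℝ E) {φ : E → G} (hφ : ContDiff ℝ 2 φ) (x : E) (s : ℝ) :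
    s • ∫ ω, ∑ k, dirDeriv (e k) (dirDeriv (e k) φ) (x + s • ω) ∂sphereMeasure E
      = ((Fintype.card ι : ℝ) - 1) • ∫ ω, dirDeriv ω φ (x + s • ω) ∂sphereMeasure E
        + s • ∫ ω, dirDeriv ω (dirDeriv ω φ) (x + s • ω) ∂sphereMeasure E := by
  have hdiv := integral_sum_dirDeriv_apply_sphereMeasure e (A := fun ω => fderiv ℝ φ (x + s • ω))
    ((hφ.fderiv_right one_add_one_eq_two.le).comp (by fun_prop))
  simp only [dirDeriv_comp_const_add_smul, smul_apply, ← Finset.smul_sum, integral_smul,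
    ← dirDeriv_dirDeriv_eq_dirDeriv_fderiv hφ] at hdiv
  exact hdiv

end Divergence

section SphericalIntegral

variable {E : Type u₁} [NormedAddCommGroup E] [InnerProductSpace ℝ E] [FiniteDimensional ℝ E]
  [MeasurableSpace E] [BorelSpace E]
  {G : Type max u₁ u₂} [NormedAddCommGroup G] [NormedSpace ℝ G]

/-- The integral of `g` over the sphere of radius `p.1` around `p.2`, with respect to the
normalization in which every sphere has the total mass of the unit sphere. -/
def sphericalIntegral (g : E → G) (p : ℝ × E) : G := ∫ ω, g (p.2 + p.1 • ω) ∂sphereMeasure E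

theorem sphericalIntegral_time_zero [CompleteSpace G] (g : E → G) (x : E) :
    sphericalIntegral g (0, x) = (sphereMeasure E).real univ • g x := by
  simp [sphericalIntegral]

theorem contDiff_sphericalIntegral {g : E → G} {n : ℕ} (hg : ContDiff ℝ n g) :
    ContDiff ℝ n (sphericalIntegral g) :=
  contDiff_integral_of_contDiff (F := fun (p : ℝ × E) ω => g (p.2 + p.1 • ω)) (by fun_prop)
    (isCompact_sphere 0 1) (ae_mem_sphere_sphereMeasure E)

theorem dirDeriv_sphericalIntegral {g : E → G} (hg : ContDiff ℝ 1 g) (w : ℝ × E) :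
    dirDeriv w (sphericalIntegral g)
      = fun p => ∫ ω, dirDeriv (w.2 + w.1 • ω) g (p.2 + p.1 • ω) ∂sphereMeasure E := by
  refine (dirDeriv_integral_of_contDiff (F := fun (p : ℝ × E) ω => g (p.2 + p.1 • ω))
    (by fun_prop) (isCompact_sphere 0 1) (ae_mem_sphere_sphereMeasure E) w).trans ?_
  refine funext fun p => integral_congr_ae (.of_forall fun ω => ?_)
  exact congrFun (dirDeriv_comp_clm (hg.differentiable one_ne_zero)
    (.snd ℝ ℝ E + (ContinuousLinearMap.fst ℝ ℝ E).smulRight ω) w) p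

theorem dirDeriv_dirDeriv_sphericalIntegral {g : E → G} (hg : ContDiff ℝ 2 g) (w p : ℝ × E) :
    dirDeriv w (dirDeriv w (sphericalIntegral g)) p
      = ∫ ω, dirDeriv (w.2 + w.1 • ω) (dirDeriv (w.2 + w.1 • ω) g) (p.2 + p.1 • ω)
          ∂sphereMeasure E := by
  have hg' : ContDiff ℝ 1 (fderiv ℝ g) := hg.fderiv_right one_add_one_eq_two.le
  have hF : ContDiff ℝ 1
      (uncurry fun (p : ℝ × E) ω => dirDeriv (w.2 + w.1 • ω) g (p.2 + p.1 • ω)) := by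
    exact (hg'.comp (f := fun q : (ℝ × E) × E => q.1.2 + q.1.1 • q.2) (by fun_prop)).clm_apply
      (by fun_prop)
  rw [dirDeriv_sphericalIntegral (hg.of_le one_le_two),
    dirDeriv_integral_of_contDiff hF (isCompact_sphere 0 1) (ae_mem_sphere_sphereMeasure E)]
  refine integral_congr_ae (.of_forall fun ω => ?_)
  exact congrFun (dirDeriv_comp_clm
    ((contDiff_dirDeriv hg one_add_one_eq_two.le _).differentiable one_ne_zero)
    (.snd ℝ ℝ E + (ContinuousLinearMap.fst ℝ ℝ E).smulRight ω) w) p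

end SphericalIntegral

section Kirchhoff

theorem fst_smul_dAlembertian_sphericalIntegral {ι : Type u₁} [Fintype ι] [DecidableEq ι]
    {G : Type max u₁ u₂} [NormedAddCommGroup G] [NormedSpace ℝ G]
    {g : EuclideanSpace ℝ ι → G} (hg : ContDiff ℝ 2 g) (p : ℝ × EuclideanSpace ℝ ι) :
    p.1 • dAlembertian (sphericalIntegral g) p
      = (1 - Fintype.card ι : ℝ) • dirDeriv (1, 0) (sphericalIntegral g) p := by
  have hcont (v : EuclideanSpace ℝ ι) :
      Continuous fun ω => dirDeriv v (dirDeriv v g) (p.2 + p.1 • ω) :=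
    (contDiff_dirDeriv (n := 0) (contDiff_dirDeriv hg one_add_one_eq_two.le v)
      (zero_add 1).le v).continuous.comp (by fun_prop)
  have hdarboux := smul_integral_sum_dirDeriv_dirDeriv_sphereMeasure
    (EuclideanSpace.basisFun ι ℝ) hg p.2 p.1
  simp only [EuclideanSpace.basisFun_apply] at hdarboux
  rw [integral_finsetSum _ fun k _ => integrable_sphereMeasure_of_continuous (hcont _)] at hdarboux
  simp only [dAlembertian, dirDeriv_dirDeriv_sphericalIntegral hg]
  simp only [dirDeriv_sphericalIntegral (hg.of_le one_le_two), zero_smul, one_smul, add_zero,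
    zero_add, smul_sub, hdarboux]
  module

variable {G : Type*} [NormedAddCommGroup G] [NormedSpace ℝ G]

/-- Up to the factor `4π`, Kirchhoff's formula for the solution of the homogeneous wave equation
in three space dimensions with position `0` and velocity `g` at time `0`. -/
def kirchhoff (g : EuclideanSpace ℝ (Fin 3) → G) (p : ℝ × EuclideanSpace ℝ (Fin 3)) : G :=
  p.1 • sphericalIntegral g p

variable {g : EuclideanSpace ℝ (Fin 3) → G}

theorem dirDeriv_kirchhoff_time_zero [CompleteSpace G] (hg : ContDiff ℝ 1 g)
    (x : EuclideanSpace ℝ (Fin 3)) :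
    dirDeriv (1, 0) (kirchhoff g) (0, x) = (4 * Real.pi) • g x := by
  have hdiff := (contDiff_sphericalIntegral (n := 1) hg).differentiable one_ne_zero
  rw [← sphereMeasure_real_univ_fin_three, ← sphericalIntegral_time_zero]
  refine (congrFun (dirDeriv_fst_smul hdiff (1, 0)) (0, x)).trans ?_
  simp

theorem dAlembertian_kirchhoff (hg : ContDiff ℝ 2 g) : dAlembertian (kirchhoff g) = 0 := by
  funext p
  refine (dAlembertian_fst_smul (contDiff_sphericalIntegral (n := 2) hg) p).trans ?_
  rw [fst_smul_dAlembertian_sphericalIntegral hg, Fintype.card_fin, Pi.zero_apply]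
  module

/-- The wave emitted at time `τ` by the source `f`: up to the factor `4π`, the solution of the
homogeneous wave equation with position `0` and velocity `f (τ, ·)` at time `τ`. -/
def emittedWave (f : ℝ × EuclideanSpace ℝ (Fin 3) → G) (τ : ℝ)
    (p : ℝ × EuclideanSpace ℝ (Fin 3)) : G :=
  kirchhoff (fun y => f (τ, y)) (p - (τ, 0))

theorem emittedWave_self (f : ℝ × EuclideanSpace ℝ (Fin 3) → G)
    (p : ℝ × EuclideanSpace ℝ (Fin 3)) : emittedWave f p.1 p = 0 := by
  simp [emittedWave, kirchhoff]

variable {f : ℝ × EuclideanSpace ℝ (Fin 3) → G}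

theorem contDiff_uncurry_emittedWave {n : ℕ} (hf : ContDiff ℝ n f) :
    ContDiff ℝ n (uncurry (emittedWave f)) := by
  have hint := contDiff_integral_of_contDiff
    (F := fun (q : ℝ × (ℝ × EuclideanSpace ℝ (Fin 3))) ω => f (q.1, q.2.2 + (q.2.1 - q.1) • ω))
    (by fun_prop) (isCompact_sphere 0 1) (ae_mem_sphere_sphereMeasure _)
  have heq : uncurry (emittedWave f) = fun q => (q.2.1 - q.1) • ∫ ω,
      f (q.1, q.2.2 + (q.2.1 - q.1) • ω) ∂sphereMeasure (EuclideanSpace ℝ (Fin 3)) := by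
    funext q
    simp [uncurry, emittedWave, kirchhoff, sphericalIntegral]
  rw [heq]
  exact ContDiff.smul (by fun_prop) hint

theorem dAlembertian_emittedWave (hf : ContDiff ℝ 2 f) (τ : ℝ) :
    dAlembertian (emittedWave f τ) = 0 := by
  funext p
  refine (dAlembertian_comp_sub _ (τ, 0) p).trans ?_
  rw [dAlembertian_kirchhoff (by fun_prop)]
  rfl

theorem dirDeriv_emittedWave_self [CompleteSpace G] (hf : ContDiff ℝ 1 f)
    (p : ℝ × EuclideanSpace ℝ (Fin 3)) :
    dirDeriv (1, 0) (emittedWave f p.1) p = (4 * Real.pi) • f p := by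
  refine (congrFun (dirDeriv_comp_sub _ (p.1, 0) (1, 0)) p).trans ?_
  have hp : p - (p.1, 0) = (0, p.2) := by ext <;> simp
  rw [hp, dirDeriv_kirchhoff_time_zero (by fun_prop)]

theorem dAlembertian_duhamel_emittedWave [CompleteSpace G] (hf : ContDiff ℝ 2 f)
    (p : ℝ × EuclideanSpace ℝ (Fin 3)) :
    dAlembertian (duhamel (emittedWave f)) p = (4 * Real.pi) • f p := by
  rw [dAlembertian_duhamel (contDiff_uncurry_emittedWave (n := 2) hf) (emittedWave_self f)
    (dAlembertian_emittedWave hf), dirDeriv_emittedWave_self (hf.of_le one_le_two)]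

end Kirchhoff

section PolarCoordinates

variable {E : Type*} [NormedAddCommGroup E] [InnerProductSpace ℝ E] [FiniteDimensional ℝ E]
  [MeasurableSpace E] [BorelSpace E] {G : Type*} [NormedAddCommGroup G] [NormedSpace ℝ G]

theorem integral_eq_integral_Ioi_sphereMeasure [Nontrivial E] {h : E → G} (hh : Integrable h) :
    ∫ z, h z
      = ∫ r in Ioi (0 : ℝ), r ^ (finrank ℝ E - 1) • ∫ ω, h (r • ω) ∂sphereMeasure E := by
  set n := finrank ℝ E - 1
  have hpolar := (volume : Measure E).measurePreserving_homeomorphUnitSphereProd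
  have hemb := (homeomorphUnitSphereProd E).measurableEmbedding
  set g : Metric.sphere (0 : E) 1 × Ioi (0 : ℝ) → G := fun y => h (y.2.1 • y.1.1)
  have hg (z : ({0}ᶜ : Set E)) : g (homeomorphUnitSphereProd E z) = h z :=
    congrArg (fun z : ({0}ᶜ : Set E) => h z) ((homeomorphUnitSphereProd E).symm_apply_apply z)
  have hgint : Integrable g ((volume : Measure E).toSphere.prod (Measure.volumeIoiPow n)) := by
    rw [← hpolar.integrable_comp_emb hemb, comp_def]
    simp only [hg]
    exact (integrableOn_iff_comap_subtypeVal (measurableSet_singleton _).compl).1 hh.integrableOn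
  calc ∫ z, h z = ∫ z : ({0}ᶜ : Set E), h z ∂(volume.comap Subtype.val) := by
        rw [integral_subtype_comap (measurableSet_singleton _).compl h, restrict_compl_singleton]
    _ = ∫ y, g y ∂(volume : Measure E).toSphere.prod (Measure.volumeIoiPow n) := by
        rw [← hpolar.integral_comp hemb]
        simp only [hg]
    _ = ∫ r : Ioi (0 : ℝ), ∫ ω, h (r.1 • ω) ∂sphereMeasure E ∂Measure.volumeIoiPow n := by
        simp only [integral_prod_symm _ hgint, integral_sphereMeasure_eq_integral_toSphere, g]
    _ = ∫ r in Ioi (0 : ℝ), (r ^ n).toNNReal • ∫ ω, h (r • ω) ∂sphereMeasure E := by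
        rw [← integral_subtype_comap measurableSet_Ioi fun r : ℝ => (r ^ n).toNNReal • _]
        exact integral_withDensity_eq_integral_smul
          (measurable_subtype_coe.pow_const _).real_toNNReal _
    _ = ∫ r in Ioi (0 : ℝ), r ^ n • ∫ ω, h (r • ω) ∂sphereMeasure E :=
        setIntegral_congr_fun measurableSet_Ioi fun r (hr : 0 < r) => by
          simp only [NNReal.smul_def, Real.coe_toNNReal _ (pow_nonneg hr.le n)]

theorem integrableOn_closedBall_inv_norm (hE : 2 ≤ finrank ℝ E) (t : ℝ) :
    IntegrableOn (fun z : E => ‖z‖⁻¹) (Metric.closedBall 0 t) := by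
  have : Nontrivial E := nontrivial_of_finrank_pos (R := ℝ) (by omega)
  suffices hball : IntegrableOn (fun z : E => ‖z‖⁻¹) (Metric.ball 0 (t + 1)) from
    hball.mono_set (Metric.closedBall_subset_ball (lt_add_one t))
  rw [integrableOn_fun_norm_addHaar volume (f := fun r => r⁻¹)]
  have hpow : IntegrableOn (fun r : ℝ => r ^ (finrank ℝ E - 2)) (Ioo 0 (t + 1)) :=
    (continuous_pow _).integrableOn_Icc.mono_set Ioo_subset_Icc_self
  refine hpow.congr_fun (fun r hr => ?_) measurableSet_Ioo
  have hr0 : r ≠ 0 := hr.1.ne'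
  rw [smul_eq_mul, ← div_eq_mul_inv, eq_div_iff hr0, ← pow_succ]
  congr 1
  omega

theorem setIntegral_closedBall_inv_norm_smul (hE : 2 ≤ finrank ℝ E) {g : E → G}
    (hg : Continuous g) {t : ℝ} (ht : 0 ≤ t) :
    ∫ z in Metric.closedBall 0 t, ‖z‖⁻¹ • g z
      = ∫ r in 0..t, r ^ (finrank ℝ E - 2) • ∫ ω, g (r • ω) ∂sphereMeasure E := by
  have : Nontrivial E := nontrivial_of_finrank_pos (R := ℝ) (by omega)
  have hint : IntegrableOn (fun z => ‖z‖⁻¹ • g z) (Metric.closedBall 0 t) :=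
    (integrableOn_closedBall_inv_norm hE t).smul_continuousOn hg.continuousOn
      (isCompact_closedBall 0 t)
  have hradial (r : ℝ) (hr : r ∈ Ioi 0) :
      r ^ (finrank ℝ E - 1) • ∫ ω, (Metric.closedBall 0 t).indicator (fun z => ‖z‖⁻¹ • g z) (r • ω)
          ∂sphereMeasure E
        = (Iic t).indicator (fun r => r ^ (finrank ℝ E - 2) • ∫ ω, g (r • ω) ∂sphereMeasure E)
          r := by
    have hr0 : r ≠ 0 := (mem_Ioi.1 hr).ne'
    have hω : ∀ᵐ ω ∂sphereMeasure E,
        (Metric.closedBall 0 t).indicator (fun z => ‖z‖⁻¹ • g z) (r • ω)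
          = (Iic t).indicator (fun r => r⁻¹ • g (r • ω)) r := by
      filter_upwards [ae_mem_sphere_sphereMeasure E] with ω hω
      have hnorm : ‖r • ω‖ = r := by
        rw [norm_smul, mem_sphere_zero_iff_norm.1 hω, mul_one, Real.norm_of_nonneg hr.le]
      simp only [indicator, mem_closedBall_zero_iff, mem_Iic, hnorm]
    have hpow : r ^ (finrank ℝ E - 1) * r⁻¹ = r ^ (finrank ℝ E - 2) := by
      rw [← div_eq_mul_inv, div_eq_iff hr0, ← pow_succ]
      congr 1
      omega
    rw [integral_congr_ae hω]
    by_cases hrt : r ≤ t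
    · simp only [indicator, mem_Iic, hrt, if_true, integral_smul, smul_smul, hpow]
    · simp [indicator, hrt]
  rw [← integral_indicator Metric.isClosed_closedBall.measurableSet,
    integral_eq_integral_Ioi_sphereMeasure
      ((integrable_indicator_iff Metric.isClosed_closedBall.measurableSet).2 hint),
    setIntegral_congr_fun measurableSet_Ioi hradial, setIntegral_indicator measurableSet_Iic,
    Ioi_inter_Iic, intervalIntegral.integral_of_le ht]

end PolarCoordinates

section RetardedPotential

variable {G : Type*} [NormedAddCommGroup G] [NormedSpace ℝ G]
  {f : ℝ × EuclideanSpace ℝ (Fin 3) → G}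

/-- The retarded potential `(4π)⁻¹ ∫_{|x - y| ≤ t} f (t - |x - y|, y) / |x - y| dy` of the source
`f` at time `t = p.1` and position `x = p.2`. -/
def retardedPotential (f : ℝ × EuclideanSpace ℝ (Fin 3) → G)
    (p : ℝ × EuclideanSpace ℝ (Fin 3)) : G :=
  (4 * Real.pi)⁻¹ • ∫ y in {y | dist p.2 y ≤ p.1}, (dist p.2 y)⁻¹ • f (p.1 - dist p.2 y, y)

theorem emittedWave_sub_apply (f : ℝ × EuclideanSpace ℝ (Fin 3) → G) (t r : ℝ)
    (x : EuclideanSpace ℝ (Fin 3)) :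
    emittedWave f (t - r) (t, x)
      = r • ∫ ω, f (t - r, x + r • ω) ∂sphereMeasure (EuclideanSpace ℝ (Fin 3)) := by
  simp [emittedWave, kirchhoff, sphericalIntegral]

theorem retardedPotential_eq_duhamel (hf : Continuous f) {t : ℝ} (ht : 0 ≤ t)
    (x : EuclideanSpace ℝ (Fin 3)) :
    retardedPotential f (t, x) = (4 * Real.pi)⁻¹ • duhamel (emittedWave f) (t, x) := by
  have hdim : finrank ℝ (EuclideanSpace ℝ (Fin 3)) = 3 := finrank_euclideanSpace_fin
  have hball : (x + ·) ⁻¹' {y | dist x y ≤ t} = Metric.closedBall 0 t := by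
    ext z
    simp
  refine congrArg ((4 * Real.pi)⁻¹ • ·) ?_
  calc ∫ y in {y | dist x y ≤ t}, (dist x y)⁻¹ • f (t - dist x y, y)
      = ∫ z in Metric.closedBall 0 t, ‖z‖⁻¹ • f (t - ‖z‖, x + z) := by
        rw [← (measurePreserving_add_left volume x).setIntegral_preimage_emb
          (measurableEmbedding_addLeft x), hball]
        simp only [dist_self_add_right]
    _ = ∫ r in 0..t, r ^ (finrank ℝ (EuclideanSpace ℝ (Fin 3)) - 2) •
          ∫ ω, f (t - ‖r • ω‖, x + r • ω) ∂sphereMeasure (EuclideanSpace ℝ (Fin 3)) :=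
        setIntegral_closedBall_inv_norm_smul (by omega) (by fun_prop) ht
    _ = ∫ r in 0..t, emittedWave f (t - r) (t, x) := by
        refine intervalIntegral.integral_congr fun r hr => ?_
        have hr : 0 ≤ r := (uIcc_of_le ht ▸ hr).1
        simp only [hdim, Nat.reduceSub, pow_one, emittedWave_sub_apply]
        congr 1
        refine integral_congr_ae ?_
        filter_upwards [ae_mem_sphere_sphereMeasure _] with ω hω
        rw [norm_smul, mem_sphere_zero_iff_norm.1 hω, mul_one, Real.norm_of_nonneg hr]
    _ = duhamel (emittedWave f) (t, x) := by
        simp [duhamel, intervalIntegral.integral_comp_sub_left fun τ => emittedWave f τ (t, x)]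

end RetardedPotential

theorem tendstoUniformlyOn_zero_of_eqOn_of_continuous {X G : Type*} [TopologicalSpace X]
    [SeminormedAddCommGroup G] {V W : ℝ × X → G} (hVW : EqOn V W (Ioi 0 ×ˢ univ))
    (hW : Continuous W) (hW0 : ∀ x, W (0, x) = 0) {K : Set X} (hK : IsCompact K) :
    TendstoUniformlyOn (fun t x => V (t, x)) (fun _ => 0) (𝓝[>] 0) K := by
  have hWlim : TendstoUniformlyOn (fun t x => W (t, x)) (fun _ => 0) (𝓝[>] 0) K := by
    refine fun U hU => nhdsWithin_le_nhds (hK.eventually_forall_of_forall_eventually fun x _ => ?_)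
    have hlim : Tendsto W (𝓝 (0, x)) (𝓝 0) := hW0 x ▸ hW.tendsto (0, x)
    exact hlim (mem_nhds_left 0 hU)
  refine hWlim.congr ?_
  filter_upwards [self_mem_nhdsWithin] with t ht x _ using (hVW ⟨ht, mem_univ x⟩).symm

theorem retarded_potential_solves_wave_general
    {G : Type*} [NormedAddCommGroup G] [NormedSpace ℝ G] [CompleteSpace G]
    {f V : ℝ × EuclideanSpace ℝ (Fin 3) → G} (hf : ContDiff ℝ 2 f)
    (hV : EqOn V (retardedPotential f) (Ioi 0 ×ˢ univ)) :
    ContDiffOn ℝ 2 V (Ioi 0 ×ˢ univ) ∧ EqOn (dAlembertian V) f (Ioi 0 ×ˢ univ) ∧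
    ∀ K : Set (EuclideanSpace ℝ (Fin 3)), IsCompact K →
      TendstoUniformlyOn (fun t x => V (t, x)) (fun _ => 0) (𝓝[>] 0) K ∧
      TendstoUniformlyOn (fun t x => dirDeriv (1, 0) V (t, x)) (fun _ => 0) (𝓝[>] 0) K := by
  have hwave : ContDiff ℝ 2 (uncurry (emittedWave f)) := contDiff_uncurry_emittedWave hf
  have hduhamel : ContDiff ℝ 2 (duhamel (emittedWave f)) := contDiff_duhamel hwave
  have hVW : EqOn V ((4 * Real.pi)⁻¹ • duhamel (emittedWave f)) (Ioi 0 ×ˢ univ) := fun p hp =>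
    (hV hp).trans (retardedPotential_eq_duhamel hf.continuous (le_of_lt hp.1) p.2)
  have hopen : IsOpen (Ioi (0 : ℝ) ×ˢ (univ : Set (EuclideanSpace ℝ (Fin 3)))) :=
    isOpen_Ioi.prod isOpen_univ
  refine ⟨(hduhamel.const_smul _).contDiffOn.congr hVW, fun p hp => ?_, fun K hK => ⟨?_, ?_⟩⟩
  · rw [eqOn_dAlembertian hopen hVW hp, dAlembertian_const_smul, Pi.smul_apply,
      dAlembertian_duhamel_emittedWave hf, inv_smul_smul₀ (by positivity)]
  · exact tendstoUniformlyOn_zero_of_eqOn_of_continuous hVW (hduhamel.const_smul _).continuous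
      (fun x => by simp [duhamel_time_zero]) hK
  · have hdirDeriv := eqOn_dirDeriv hopen hVW (1, 0)
    rw [dirDeriv_const_smul, dirDeriv_duhamel_of_vanishing (hwave.of_le one_le_two)
      (emittedWave_self f)] at hdirDeriv
    refine tendstoUniformlyOn_zero_of_eqOn_of_continuous hdirDeriv
      (Continuous.const_smul ?_ _) (fun x => by simp [duhamel_time_zero]) hK
    exact (contDiff_duhamel (n := 1)
      (contDiff_uncurry_dirDeriv hwave one_add_one_eq_two.le (1, 0))).continuous

/-- For smooth compactly supported f, the retarded potential
    V(t,x) = (1/4π) ∫_{|x−y|≤t} f(t−|x−y|, y)/|x−y| dy is C² on (0,∞) × ℝ³,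
    solves the inhomogeneous wave equation ∂ₜ²V − ΔV = f there, and has
    vanishing Cauchy data: V(t,x) → 0 and ∂ₜV(t,x) → 0 as t → 0⁺, locally
    uniformly in x. -/
theorem retarded_potential_solves_wave
    (f : ℝ × EuclideanSpace ℝ (Fin 3) → ℝ)
    (hf : ContDiff ℝ (⊤ : ℕ∞) f) (hsupp : HasCompactSupport f)
    (V : ℝ × EuclideanSpace ℝ (Fin 3) → ℝ)
    (hV : ∀ t : ℝ, 0 < t → ∀ x : EuclideanSpace ℝ (Fin 3),
      V (t, x) = (4 * Real.pi)⁻¹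
        * ∫ y in {y : EuclideanSpace ℝ (Fin 3) | dist x y ≤ t},
            f (t - dist x y, y) / dist x y) :
    ContDiffOn ℝ 2 V (Ioi (0 : ℝ) ×ˢ univ) ∧
    (∀ p ∈ Ioi (0 : ℝ) ×ˢ (univ : Set (EuclideanSpace ℝ (Fin 3))),
      fderiv ℝ (fun q => fderiv ℝ V q (1, 0)) p (1, 0)
        - ∑ k, fderiv ℝ (fun q => fderiv ℝ V q (0, EuclideanSpace.single k 1)) p
            (0, EuclideanSpace.single k 1)
        = f p) ∧
    (∀ K : Set (EuclideanSpace ℝ (Fin 3)), IsCompact K →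
      TendstoUniformlyOn (fun (t : ℝ) (x : EuclideanSpace ℝ (Fin 3)) => V (t, x))
        (fun _ => 0) (nhdsWithin 0 (Ioi 0)) K ∧
      TendstoUniformlyOn
        (fun (t : ℝ) (x : EuclideanSpace ℝ (Fin 3)) => fderiv ℝ V (t, x) (1, 0))
        (fun _ => 0) (nhdsWithin 0 (Ioi 0)) K) := by
  refine retarded_potential_solves_wave_general (contDiff_infty.1 hf 2) fun p hp => ?_
  simp only [retardedPotential, smul_eq_mul, ← div_eq_inv_mul, hV p.1 hp.1 p.2]

end
end
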